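/- arXiv:0804.3682 — 7 statements merged into one kernel-verified Lean document; each statement's English description precedes it below -/
import Mathlib

section
/- Let m ≥ 3 be an odd integer, let a ∈ {0,1,…,m−1}, and let j ∈ {0,1}. Then for every ε > 0 one has T^{(j)}_{m,a}(x) = x/(2m) + O(x^{α(m)+ε}) as x → ∞, where α(m) = max_{1 ≤ l ≤ m−1} ( 1 + (1/(h·ln 2)) · Σ_{k=0}^{h−1} ln |sin(π l 2^k / m)| ) and h is the multiplicative order of 2 modulo m. (Upper-bound half of Theorem 1.) -/
/-!
The argument is Fourier analysis on `ℤ/m`. Since `1_{s(n) ≡ j} = (1 + (-1)^{j + s(n)}) / 2`, the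
count differs from half the number of `n < x` in the residue class by half of a signed sum
`∑ (-1)^{s(n)}` over that class (`T_eq`). Expanding the class in additive characters bounds the
signed sum by the average over `l < m` of the moduli of the Thue–Morse exponential sums
`F_z(x) = ∑_{n < x} (-1)^{s(n)} z^n` at `z = ω^l`, `ω = exp(2πi/m)` (`signed_count_bound`).

Splitting off the last binary digit gives `F_z(2x) = (1 - z) F_{z²}(x)`, hence
`|F_z(x)| ≤ ∑_i ∏_{k<i} |1 - z^{2^k}|`, with `i` below the number of binary digits of `x`
(`norm_twistedSum_le`). As `2^h ≡ 1 (mod m)`, the products are multiplicative over blocks of length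
`h`, and because `|1 - ω^{l 2^k}| = 2 |sin(π l 2^k / m)|` a full block is at most `2^{αh}` by the
definition of `α` (`riesz_eq_rpow`). Summing a geometric series yields `F_z(x) = O(x^{α+ε})`.

Absorbing bounded terms requires `α ≥ 0`. This follows from `∏_{l=1}^{m-1} (1 - ω^l) = m`, which
makes the product of all full blocks equal to `m^h ≥ 1` (`exists_one_le_riesz`).
-/

/-- `s n` is the number of 1's in the binary expansion of `n`. -/
def s (n : ℕ) : ℕ := (Nat.digits 2 n).sum

/-- `T m a j x` counts natural numbers `n < x` with `n ≡ a (mod m)` and `s n ≡ j (mod 2)`. -/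
def T (m a j x : ℕ) : ℕ :=
  ((Finset.range x).filter (fun n => n % m = a ∧ s n % 2 = j)).card

/-- The Thue–Morse exponential sum `∑_{n < x} (-1)^{s(n)} z^n`. -/
noncomputable def twistedSum (z : ℂ) (x : ℕ) : ℂ :=
  ∑ n ∈ Finset.range x, (-1) ^ s n * z ^ n

/-- The partial Riesz-type product `∏_{k < i} |1 - z^{2^k}|`. For `|z| = 1` it is the modulus of
`twistedSum z (2 ^ i)`. -/
noncomputable def riesz (z : ℂ) (i : ℕ) : ℝ :=
  ∏ k ∈ Finset.range i, ‖1 - z ^ 2 ^ k‖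

lemma s_two_mul (n : ℕ) : s (2 * n) = s n := by
  rcases Nat.eq_zero_or_pos n with rfl | hn
  · simp
  · unfold s
    rw [Nat.digits_def' (by norm_num) (by omega)]
    simp

lemma s_two_mul_add_one (n : ℕ) : s (2 * n + 1) = s n + 1 := by
  unfold s
  rw [Nat.digits_def' (by norm_num) (by omega)]
  have h1 : (2 * n + 1) % 2 = 1 := by omega
  have h2 : (2 * n + 1) / 2 = n := by omega
  rw [h1, h2]
  simp [add_comm]

/-- Splitting the summation variable by its last binary digit. -/
lemma twistedSum_two_mul (z : ℂ) (x : ℕ) :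
    twistedSum z (2 * x) = (1 - z) * twistedSum (z ^ 2) x := by
  unfold twistedSum
  induction x with
  | zero => simp
  | succ x ih =>
    rw [show 2 * (x + 1) = 2 * x + 1 + 1 by ring, Finset.sum_range_succ, Finset.sum_range_succ, ih,
      Finset.sum_range_succ, s_two_mul, s_two_mul_add_one]
    ring

lemma riesz_nonneg (z : ℂ) (i : ℕ) : 0 ≤ riesz z i :=
  Finset.prod_nonneg fun _ _ => norm_nonneg _

lemma riesz_succ (z : ℂ) (i : ℕ) : riesz z (i + 1) = ‖1 - z‖ * riesz (z ^ 2) i := by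
  unfold riesz
  rw [Finset.prod_range_succ', mul_comm]
  simp only [pow_zero, pow_one, ← pow_mul, pow_succ' 2]

/-- Peeling off the binary digits of `x` one at a time, each odd digit costing one term of
modulus one. -/
lemma norm_twistedSum_le (x : ℕ) : ∀ z : ℂ, ‖z‖ = 1 →
    ‖twistedSum z x‖ ≤ ∑ i ∈ Finset.range (Nat.size x), riesz z i := by
  induction x using Nat.strong_induction_on with
  | _ x ih =>
    intro z hz
    rcases Nat.eq_zero_or_pos x with rfl | hx
    · simp [twistedSum]
    have hsize : Nat.size x = Nat.size (x / 2) + 1 := by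
      have := Nat.size_bit (b := Nat.bodd x) (n := Nat.div2 x)
      rw [Nat.bit_bodd_div2, Nat.div2_val] at this
      exact this (by omega)
    have hstep : ‖twistedSum z x‖ ≤ ‖1 - z‖ * ‖twistedSum (z ^ 2) (x / 2)‖ + 1 := by
      rcases Nat.mod_two_eq_zero_or_one x with h | h
      · rw [show x = 2 * (x / 2) by omega, twistedSum_two_mul, norm_mul]
        simp
      · have e : twistedSum z x = twistedSum z (2 * (x / 2)) +
            (-1) ^ s (2 * (x / 2)) * z ^ (2 * (x / 2)) := by
          conv_lhs => rw [show x = 2 * (x / 2) + 1 by omega]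
          unfold twistedSum
          rw [Finset.sum_range_succ]
        rw [e, twistedSum_two_mul]
        refine (norm_add_le _ _).trans ?_
        simp [hz]
    have hih := ih (x / 2) (by omega) (z ^ 2) (by simp [hz])
    rw [hsize, Finset.sum_range_succ']
    simp only [riesz_succ, ← Finset.mul_sum]
    refine hstep.trans ?_
    have : riesz z 0 = 1 := by simp [riesz]
    rw [this]
    gcongr

lemma riesz_le_two_pow {z : ℂ} (hz : ‖z‖ = 1) (i : ℕ) : riesz z i ≤ 2 ^ i := by
  unfold riesz
  calc _ ≤ ∏ k ∈ Finset.range i, (2 : ℝ) := by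
        refine Finset.prod_le_prod (fun _ _ => norm_nonneg _) fun k _ => ?_
        refine (norm_sub_le _ _).trans ?_
        simp [hz]; norm_num
    _ = _ := by simp

/-- Multiplicativity over a full period of the orbit of `z` under squaring. -/
lemma riesz_add {z : ℂ} {h : ℕ} (hz : z ^ 2 ^ h = z) (i : ℕ) :
    riesz z (h + i) = riesz z h * riesz z i := by
  unfold riesz
  rw [Finset.prod_range_add]
  congr 1
  refine Finset.prod_congr rfl fun k _ => ?_
  rw [pow_add, pow_mul, hz]

lemma riesz_le {z : ℂ} {h : ℕ} (hh : 0 < h) (hz : z ^ 2 ^ h = z) (hz1 : ‖z‖ = 1) {r : ℝ}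
    (hr : 1 ≤ r) (hB : riesz z h ≤ r ^ h) (i : ℕ) : riesz z i ≤ 2 ^ h * r ^ i := by
  induction i using Nat.strong_induction_on with
  | _ i ih =>
    rcases lt_or_ge i h with hi | hi
    · calc riesz z i ≤ 2 ^ i := riesz_le_two_pow hz1 i
        _ ≤ 2 ^ h := pow_le_pow_right₀ (by norm_num) hi.le
        _ ≤ 2 ^ h * r ^ i := le_mul_of_one_le_right (by positivity) (one_le_pow₀ hr)
    · obtain ⟨i, rfl⟩ := Nat.exists_eq_add_of_le hi
      rw [riesz_add hz, pow_add]
      calc riesz z h * riesz z i ≤ r ^ h * (2 ^ h * r ^ i) := by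
            gcongr
            · exact riesz_nonneg _ _
            · exact ih i (by omega)
        _ = _ := by ring

lemma twistedSum_one_le (x : ℕ) : ‖twistedSum 1 x‖ ≤ 1 := by
  refine (norm_twistedSum_le x 1 (by simp)).trans ?_
  rcases Nat.size x with _ | K
  · simp
  · rw [Finset.sum_range_succ']
    simp [riesz]

/-- Summing the geometric series `r ^ i` with `r = 2 ^ β` over the binary digits of `x`. -/
lemma twistedSum_bound {z : ℂ} {h : ℕ} (hh : 0 < h) (hz : z ^ 2 ^ h = z) (hz1 : ‖z‖ = 1) {β : ℝ}
    (hβ : 0 < β) (hB : riesz z h ≤ ((2 : ℝ) ^ β) ^ h) {x : ℕ} (hx : 1 ≤ x) :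
    ‖twistedSum z x‖ ≤ 2 ^ h * (2 ^ β / (2 ^ β - 1)) * (x : ℝ) ^ β := by
  set r : ℝ := 2 ^ β with hr
  have hr1 : 1 < r := Real.one_lt_rpow (by norm_num) hβ
  have hpos : 0 < r - 1 := by linarith
  refine (norm_twistedSum_le x z hz1).trans ?_
  have h1 : ∑ i ∈ Finset.range (Nat.size x), riesz z i ≤
      2 ^ h * (r ^ Nat.size x / (r - 1)) := by
    calc _ ≤ ∑ i ∈ Finset.range (Nat.size x), 2 ^ h * r ^ i :=
          Finset.sum_le_sum fun i _ => riesz_le hh hz hz1 hr1.le hB i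
      _ = 2 ^ h * ((r ^ Nat.size x - 1) / (r - 1)) := by
          rw [← Finset.mul_sum, geom_sum_eq hr1.ne']
      _ ≤ _ := by gcongr; linarith
  refine h1.trans ?_
  obtain ⟨K, hK⟩ : ∃ K, Nat.size x = K + 1 :=
    Nat.exists_eq_succ_of_ne_zero (Nat.size_pos.2 hx).ne'
  have hKx : 2 ^ K ≤ x := Nat.lt_size.1 (by omega)
  have h2 : r ^ K ≤ (x : ℝ) ^ β := by
    rw [hr, ← Real.rpow_natCast, ← Real.rpow_mul (by norm_num), mul_comm, Real.rpow_mul (by norm_num),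
      Real.rpow_natCast]
    exact Real.rpow_le_rpow (by positivity) (by exact_mod_cast hKx) hβ.le
  rw [hK, pow_succ]
  calc 2 ^ h * (r ^ K * r / (r - 1)) = 2 ^ h * (r / (r - 1)) * r ^ K := by ring
    _ ≤ _ := by gcongr

/-- Detection of the residue class `a` by the additive characters modulo `m`. -/
lemma sum_root_pow {m : ℕ} {ω : ℂ} (hω : IsPrimitiveRoot ω m) {a : ℕ} (ha : a < m) (n : ℕ) :
    ∑ l ∈ Finset.range m, ω ^ (l * (m - a)) * (ω ^ l) ^ n = if n % m = a then (m : ℂ) else 0 := by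
  have e : ∀ l, ω ^ (l * (m - a)) * (ω ^ l) ^ n = (ω ^ (n + (m - a))) ^ l := by
    intro l
    rw [← pow_mul, ← pow_add, ← pow_mul]
    ring_nf
  simp only [e]
  have key : m ∣ n + (m - a) ↔ n % m = a := by
    rw [← Nat.mod_add_div n m]
    have h1 : n % m < m := Nat.mod_lt _ (by omega)
    generalize n % m = t at *
    have h2 : (t + m * (n / m)) % m = t := by
      rw [Nat.add_mul_mod_self_left, Nat.mod_eq_of_lt h1]
    rw [h2, show t + m * (n / m) + (m - a) = (t + (m - a)) + m * (n / m) by ring,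
      Nat.dvd_add_left (Dvd.intro _ rfl)]
    constructor
    · rintro ⟨c, hc⟩
      have : c = 1 := by
        rcases c with _ | _ | c
        · simp at hc; omega
        · rfl
        · have : m * (c + 1 + 1) = m * c + m + m := by ring
          have := Nat.zero_le (m * c)
          omega
      subst this
      omega
    · rintro rfl
      exact ⟨1, by omega⟩
  split_ifs with hn
  · rw [hω.pow_eq_one_iff_dvd _ |>.2 (key.2 hn)]
    simp
  · have hne : ω ^ (n + (m - a)) ≠ 1 := fun hc =>
      hn (key.1 ((hω.pow_eq_one_iff_dvd _).1 hc))
    rw [geom_sum_eq hne, ← pow_mul, mul_comm, pow_mul, hω.pow_eq_one]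
    simp

/-- Fourier inversion on `ℤ/m` for the signed count in a residue class. -/
lemma signed_count_bound {m : ℕ} {ω : ℂ} (hω : IsPrimitiveRoot ω m) (hω1 : ‖ω‖ = 1)
    {a : ℕ} (ha : a < m) (x : ℕ) :
    (m : ℝ) * |∑ n ∈ Finset.range x with n % m = a, (-1 : ℝ) ^ s n| ≤
      ∑ l ∈ Finset.range m, ‖twistedSum (ω ^ l) x‖ := by
  have e : (m : ℂ) * ((∑ n ∈ Finset.range x with n % m = a, (-1 : ℝ) ^ s n : ℝ) : ℂ) =
      ∑ l ∈ Finset.range m, ω ^ (l * (m - a)) * twistedSum (ω ^ l) x := by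
    unfold twistedSum
    simp only [Finset.mul_sum]
    rw [Finset.sum_comm, Finset.sum_filter]
    push_cast
    rw [Finset.mul_sum]
    refine Finset.sum_congr rfl fun n _ => ?_
    simp only [mul_left_comm _ ((-1 : ℂ) ^ s n)]
    rw [← Finset.mul_sum, sum_root_pow hω ha]
    split_ifs <;> simp [mul_comm]
  calc _ = ‖(m : ℂ) * ((∑ n ∈ Finset.range x with n % m = a, (-1 : ℝ) ^ s n : ℝ) : ℂ)‖ := by
        rw [norm_mul, Complex.norm_real, Real.norm_eq_abs]; simp
    _ ≤ _ := by
        rw [e]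
        refine (norm_sum_le _ _).trans (Finset.sum_le_sum fun l _ => ?_)
        simp [hω1]

lemma T_eq (m a x : ℕ) {j : ℕ} (hj : j < 2) :
    (T m a j x : ℝ) = (((Finset.range x).filter (fun n => n % m = a)).card +
      (-1) ^ j * ∑ n ∈ Finset.range x with n % m = a, (-1 : ℝ) ^ s n) / 2 := by
  unfold T
  rw [← Finset.filter_filter, Finset.card_filter, Finset.mul_sum, Finset.card_eq_sum_ones]
  push_cast
  rw [← Finset.sum_add_distrib, Finset.sum_div]
  refine Finset.sum_congr rfl fun n _ => ?_
  rcases Nat.mod_two_eq_zero_or_one (s n) with h | h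
  · rw [(Nat.even_iff.2 h).neg_one_pow, h]
    interval_cases j <;> norm_num
  · rw [(Nat.odd_iff.2 h).neg_one_pow, h]
    interval_cases j <;> norm_num

lemma class_count (m a x : ℕ) (ha : a < m) :
    |(((Finset.range x).filter (fun n => n % m = a)).card : ℝ) - x / m| ≤ 1 := by
  have hm : 0 < m := by omega
  have h1 : ((Finset.range x).filter (fun n => n % m = a)).card =
      x / m + if a % m < x % m then 1 else 0 := by
    rw [← Nat.count_modEq_card x hm a, Nat.count_eq_card_filter_range]
    congr 1
    refine Finset.filter_congr fun n _ => ?_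
    rw [Nat.ModEq, Nat.mod_eq_of_lt ha]
  have h2 : (x : ℝ) / m = (x / m : ℕ) + ((x % m : ℕ) : ℝ) / m := by
    have : (m : ℝ) ≠ 0 := by positivity
    field_simp
    exact_mod_cast (Nat.div_add_mod x m).symm
  have h3 : ((x % m : ℕ) : ℝ) / m ≤ 1 :=
    div_le_one_of_le₀ (by exact_mod_cast (Nat.mod_lt _ hm).le) (by positivity)
  have h4 : 0 ≤ ((x % m : ℕ) : ℝ) / m := by positivity
  rw [h1, h2, abs_le]
  push_cast
  split_ifs <;> constructor <;> linarith

/-- The modulus of a cyclotomic factor as a sine. -/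
lemma norm_one_sub_root (m l k : ℕ) :
    ‖1 - (Complex.exp (2 * Real.pi * Complex.I / m) ^ l) ^ 2 ^ k‖ =
      2 * |Real.sin (Real.pi * l * 2 ^ k / m)| := by
  have : (Complex.exp (2 * Real.pi * Complex.I / m) ^ l) ^ 2 ^ k =
      Complex.exp (Complex.I * ((2 * Real.pi * l * 2 ^ k / m : ℝ) : ℂ)) := by
    rw [← pow_mul, ← Complex.exp_nat_mul]
    congr 1
    push_cast
    ring
  rw [this, norm_sub_rev, Complex.norm_exp_I_mul_ofReal_sub_one, norm_mul, Real.norm_eq_abs,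
    Real.norm_eq_abs, abs_two]
  congr 3
  ring

/-- `∏_{l=1}^{m-1} ∏_{k<h} |1 - ω^{l 2^k}| = m^h ≥ 1`, so at least one of the inner
products is at least one. -/
lemma exists_one_le_riesz {m : ℕ} (hm : 3 ≤ m) (hodd : Odd m) {ω : ℂ} (hω : IsPrimitiveRoot ω m)
    (h : ℕ) : ∃ l ∈ Finset.Icc 1 (m - 1), 1 ≤ riesz (ω ^ l) h := by
  by_contra! hc
  have hlt : ∏ l ∈ Finset.Icc 1 (m - 1), riesz (ω ^ l) h < 1 := by
    have hne : (Finset.Icc 1 (m - 1)).Nonempty := ⟨1, by simp; omega⟩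
    obtain ⟨l, hl⟩ := hne
    rw [← Finset.mul_prod_erase _ _ hl]
    have h1 : ∏ l ∈ (Finset.Icc 1 (m - 1)).erase l, riesz (ω ^ l) h ≤ 1 :=
      Finset.prod_le_one (fun _ _ => riesz_nonneg _ _)
        fun i hi => (hc i (Finset.mem_of_mem_erase hi)).le
    calc _ ≤ riesz (ω ^ l) h * 1 := by
          gcongr
          exact riesz_nonneg _ _
      _ < 1 := by simpa using hc l hl
  have hcomp : ∏ l ∈ Finset.Icc 1 (m - 1), riesz (ω ^ l) h = (m : ℝ) ^ h := by
    unfold riesz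
    rw [Finset.prod_comm]
    rw [Finset.prod_congr rfl (g := fun _ => (m : ℝ)), Finset.prod_const, Finset.card_range]
    intro k _
    have hcop : Nat.Coprime (2 ^ k) m :=
      Nat.Coprime.pow_left k (Nat.coprime_two_left.2 hodd)
    have hk := hω.pow_of_coprime _ hcop
    obtain ⟨p, rfl⟩ : ∃ p, m = p + 1 := ⟨m - 1, by omega⟩
    have hp := hk.prod_one_sub_pow_eq_order
    have hp' := congrArg norm hp
    rw [norm_prod] at hp'
    have hnorm : ‖(p : ℂ) + 1‖ = ((p + 1 : ℕ) : ℝ) := by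
      rw [← Nat.cast_add_one, Complex.norm_natCast]
    rw [← hnorm, ← hp', Nat.add_sub_cancel]
    refine (Finset.prod_nbij (fun l => l + 1) ?_ ?_ ?_ ?_).symm
    · intro l hl
      simp only [Finset.mem_range, Finset.mem_Icc] at *
      omega
    · exact (add_left_injective 1).injOn
    · intro l hl
      simp only [Finset.coe_Icc, Set.mem_Icc] at hl
      exact ⟨l - 1, by simp; omega, by simp; omega⟩
    · intro l _
      rw [← pow_mul, ← pow_mul, mul_comm]
  have : (1 : ℝ) ≤ (m : ℝ) ^ h := one_le_pow₀ (by exact_mod_cast (by omega : 1 ≤ m))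
  linarith

/-- The exponent attached to `l`, exponentiated. -/
lemma riesz_eq_rpow {m : ℕ} (hm : 3 ≤ m) (hodd : Odd m) {h : ℕ} (hh : 0 < h) {l : ℕ}
    (hl : l ∈ Finset.Icc 1 (m - 1)) :
    riesz (Complex.exp (2 * Real.pi * Complex.I / m) ^ l) h =
      ((2 : ℝ) ^ (1 + (1 / (h * Real.log 2)) *
        ∑ k ∈ Finset.range h, Real.log |Real.sin (Real.pi * l * 2 ^ k / m)|)) ^ h := by
  have hω := Complex.isPrimitiveRoot_exp m (by omega)
  have hl2 := Finset.mem_Icc.1 hl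
  have hs : ∀ k, 0 < |Real.sin (Real.pi * l * 2 ^ k / m)| := by
    intro k
    have hne : (Complex.exp (2 * Real.pi * Complex.I / m) ^ l) ^ 2 ^ k ≠ 1 := by
      rw [← pow_mul]
      intro hc
      have hd := (hω.pow_eq_one_iff_dvd _).1 hc
      have hcop : Nat.Coprime m (2 ^ k) :=
        (Nat.Coprime.pow_left k (Nat.coprime_two_left.2 hodd)).symm
      have := Nat.le_of_dvd (by omega) (hcop.dvd_of_dvd_mul_right hd)
      omega
    have h1 := norm_one_sub_root m l k
    have h2 : 0 < ‖1 - (Complex.exp (2 * Real.pi * Complex.I / m) ^ l) ^ 2 ^ k‖ :=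
      norm_pos_iff.2 (sub_ne_zero.2 hne.symm)
    linarith
  have hlog : 0 < Real.log 2 := Real.log_pos (by norm_num)
  unfold riesz
  simp only [norm_one_sub_root]
  refine Real.log_injOn_pos (Set.mem_Ioi.2 (Finset.prod_pos fun k _ => by have := hs k; positivity))
    (Set.mem_Ioi.2 (by positivity)) ?_
  rw [Real.log_prod (fun k _ => by have := hs k; positivity), Real.log_pow,
    Real.log_rpow (by norm_num)]
  rw [Finset.sum_congr rfl fun k _ => Real.log_mul two_ne_zero (hs k).ne',
    Finset.sum_add_distrib]
  have : (h : ℝ) ≠ 0 := by positivity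
  simp
  field_simp

/-- Upper-bound half of Theorem 1 (Gelfond/Shevelev, exact exponent): for odd `m ≥ 3`,
`T_{m,a}^{(j)}(x) = x/(2m) + O(x^{α+ε})` for every `ε > 0`, where
`α = max_{1 ≤ l ≤ m-1} (1 + (1/(h ln 2)) Σ_{k<h} ln |sin (π l 2^k / m)|)` and
`h` is the multiplicative order of `2` mod `m`. -/
theorem gelfond_exact_exponent_upper
    (m : ℕ) (hm : 3 ≤ m) (hodd : Odd m)
    (a : ℕ) (ha : a < m) (j : ℕ) (hj : j < 2)
    (h : ℕ) (hh : h = orderOf (2 : ZMod m))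
    (α : ℝ)
    (hα : IsGreatest { y : ℝ | ∃ l ∈ Finset.Icc 1 (m - 1),
      y = 1 + (1 / (h * Real.log 2)) *
        ∑ k ∈ Finset.range h, Real.log |Real.sin (Real.pi * l * 2 ^ k / m)| } α)
    (ε : ℝ) (hε : 0 < ε) :
    (fun x : ℕ => (T m a j x : ℝ) - x / (2 * m))
      =O[Filter.atTop] fun x : ℕ => (x : ℝ) ^ (α + ε) := by
  have hmpos : 0 < m := by omega
  have : NeZero m := ⟨hmpos.ne'⟩
  have hcop : Nat.Coprime 2 m := Nat.coprime_two_left.2 hodd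
  have hpos : 0 < h := by
    rw [hh, orderOf_pos_iff]
    have := isOfFinOrder_of_finite (ZMod.unitOfCoprime 2 hcop)
    simpa using (Units.isOfFinOrder_val).2 this
  have h2h : m ∣ 2 ^ h - 1 := by
    have h1 : ((2 ^ h : ℕ) : ZMod m) = ((1 : ℕ) : ZMod m) := by
      push_cast
      rw [hh, pow_orderOf_eq_one]
    have := (ZMod.natCast_eq_natCast_iff _ _ _).1 h1
    exact (Nat.modEq_iff_dvd' Nat.one_le_two_pow).1 this.symm
  set ω := Complex.exp (2 * Real.pi * Complex.I / m) with hωdef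
  have hω : IsPrimitiveRoot ω m := Complex.isPrimitiveRoot_exp m hmpos.ne'
  have hω1 : ‖ω‖ = 1 := hω.norm'_eq_one hmpos.ne'
  have hper : ∀ l, (ω ^ l) ^ 2 ^ h = ω ^ l := by
    intro l
    obtain ⟨c, hc⟩ := h2h
    have : 2 ^ h = m * c + 1 := by have := Nat.one_le_two_pow (n := h); omega
    rw [this, pow_succ, pow_mul, ← pow_mul ω l m, mul_comm l m, pow_mul, hω.pow_eq_one]
    simp
  have hα0 : 0 ≤ α := by
    obtain ⟨l, hl, h1⟩ := exists_one_le_riesz hm hodd hω h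
    rw [hωdef, riesz_eq_rpow hm hodd hpos hl] at h1
    refine le_trans ?_ (hα.2 ⟨l, hl, rfl⟩)
    by_contra! hc
    have := pow_lt_one₀ (by positivity)
      (Real.rpow_lt_one_of_one_lt_of_neg (by norm_num : (1 : ℝ) < 2) hc) hpos.ne'
    linarith
  set β := α + ε with hβdef
  have hβ : 0 < β := by linarith
  have hB : ∀ l ∈ Finset.Icc 1 (m - 1), riesz (ω ^ l) h ≤ ((2 : ℝ) ^ β) ^ h := by
    intro l hl
    rw [hωdef, riesz_eq_rpow hm hodd hpos hl]
    have h1 := hα.2 ⟨l, hl, rfl⟩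
    gcongr
    · norm_num
    · linarith
  set C : ℝ := 2 ^ h * (2 ^ β / (2 ^ β - 1)) with hC
  have hC0 : 0 ≤ C := by
    have : (1 : ℝ) < 2 ^ β := Real.one_lt_rpow (by norm_num) hβ
    have : (0 : ℝ) < 2 ^ β - 1 := by linarith
    positivity
  refine Asymptotics.IsBigO.of_bound (C + 1) ?_
  filter_upwards [Filter.eventually_ge_atTop 1] with x hx
  have hxβ : 1 ≤ (x : ℝ) ^ β := Real.one_le_rpow (by exact_mod_cast hx) hβ.le
  have hF : ∀ l ∈ Finset.range m, ‖twistedSum (ω ^ l) x‖ ≤ (C + 1) * (x : ℝ) ^ β := by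
    intro l hl
    rcases Nat.eq_zero_or_pos l with rfl | hl0
    · rw [pow_zero]
      refine (twistedSum_one_le x).trans ?_
      nlinarith
    · have := Finset.mem_range.1 hl
      refine (twistedSum_bound hpos (hper l) (by simp [hω1]) hβ
        (hB l (Finset.mem_Icc.2 ⟨hl0, by omega⟩)) hx).trans ?_
      gcongr
      linarith
  have hS := (signed_count_bound hω hω1 ha x).trans (Finset.sum_le_sum hF)
  rw [Finset.sum_const, Finset.card_range, nsmul_eq_mul] at hS
  have hS' := le_of_mul_le_mul_left hS (by exact_mod_cast hmpos)
  have hN := class_count m a x ha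
  rw [T_eq m a x hj]
  set S := ∑ n ∈ Finset.range x with n % m = a, (-1 : ℝ) ^ s n
  set N : ℝ := (((Finset.range x).filter (fun n => n % m = a)).card : ℝ)
  have e : (N + (-1) ^ j * S) / 2 - x / (2 * m) = (N - x / m) / 2 + (-1) ^ j * S / 2 := by
    field_simp
    ring
  have hS2 : |(-1) ^ j * S| = |S| := by rw [abs_mul]; simp
  rw [e, Real.norm_eq_abs, Real.norm_of_nonneg (by positivity)]
  refine (abs_add_le _ _).trans ?_
  rw [abs_div, abs_div, hS2, abs_two]
  nlinarith
end

section
/- Let m ≥ 3 be an odd integer, let a ∈ {0,1,…,m−1}, and let j ∈ {0,1}. Then for every ε > 0 one has T^{(j)}_{m,a}(x) − x/(2m) = Ω(x^{α(m)−ε}); that is, there exist a constant c > 0 and arbitrarily large x with |T^{(j)}_{m,a}(x) − x/(2m)| ≥ c·x^{α(m)−ε}, where α(m) = max_{1 ≤ l ≤ m−1} ( 1 + (1/(h·ln 2)) · Σ_{k=0}^{h−1} ln |sin(π l 2^k / m)| ) and h is the multiplicative order of 2 modulo m. (Lower-bound half of Theorem 1.) -/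
lemma s_block (N r : ℕ) : ∀ n < 2 ^ N, s (2 ^ N * r + n) = s r + s n := by
  induction N with
  | zero =>
    intro n hn
    have : n = 0 := by simpa using hn
    subst this
    simp [s]
  | succ N ih =>
    intro n hn
    rw [pow_succ] at hn
    obtain ⟨q, hq | hq⟩ : ∃ q, n = 2 * q ∨ n = 2 * q + 1 := ⟨n / 2, by omega⟩
    · have e : 2 ^ (N + 1) * r + n = 2 * (2 ^ N * r + q) := by rw [hq]; ring
      rw [e, s_two_mul, hq, s_two_mul, ih q (by omega)]
    · have e : 2 ^ (N + 1) * r + n = 2 * (2 ^ N * r + q) + 1 := by rw [hq]; ring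
      rw [e, s_two_mul_add_one, hq, s_two_mul_add_one, ih q (by omega)]
      ring

lemma s_one : s 1 = 1 := by simp [s]

/-- The signed count `∑ (-1)^{s(n)}` over `n < x` with `n ≡ a (mod m)`, for `a < m`. -/
def signedCount (m a x : ℕ) : ℝ :=
  ∑ n ∈ Finset.range x, if n % m = a then (-1 : ℝ) ^ s n else 0

lemma sum_sign_mul_pow (ζ : ℂ) (N : ℕ) :
    ∑ n ∈ Finset.range (2 ^ N), (-1 : ℂ) ^ s n * ζ ^ n
      = ∏ i ∈ Finset.range N, (1 - ζ ^ 2 ^ i) := by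
  induction N with
  | zero => simp [s]
  | succ N ih =>
    rw [Finset.prod_range_succ, ← ih, pow_succ, mul_two, Finset.sum_range_add, mul_sub, mul_one,
      sub_eq_add_neg, Finset.sum_mul, ← Finset.sum_neg_distrib]
    congr 1
    refine Finset.sum_congr rfl fun n hn => ?_
    have := s_block N 1 n (Finset.mem_range.mp hn)
    rw [mul_one, s_one] at this
    rw [this, pow_add, pow_add]
    ring

/-- Grouping the generating sum by residues mod `m`; pigeonhole then gives a large residue. -/
lemma exists_large_residue (m : ℕ) (hm : 0 < m) (ζ : ℂ) (hζ : ζ ^ m = 1) (hζ1 : ‖ζ‖ = 1) (x : ℕ) :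
    ∃ b < m, ‖∑ n ∈ Finset.range x, (-1 : ℂ) ^ s n * ζ ^ n‖ / m ≤ |signedCount m b x| := by
  have key : ∑ n ∈ Finset.range x, (-1 : ℂ) ^ s n * ζ ^ n
      = ∑ b ∈ Finset.range m, ζ ^ b * (signedCount m b x : ℂ) := by
    unfold signedCount
    simp only [Complex.ofReal_sum, Finset.mul_sum]
    rw [Finset.sum_comm]
    refine Finset.sum_congr rfl fun n _ => ?_
    simp only [apply_ite (fun z : ℝ => (z : ℂ)), mul_ite, Complex.ofReal_zero, mul_zero]
    rw [Finset.sum_ite_eq, if_pos (Finset.mem_range.mpr (Nat.mod_lt _ hm)),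
      ← pow_eq_pow_mod n hζ, mul_comm]
    push_cast
    rfl
  by_contra! hcon
  have hm' : (0 : ℝ) < m := by exact_mod_cast hm
  have h1 : ‖∑ n ∈ Finset.range x, (-1 : ℂ) ^ s n * ζ ^ n‖
      ≤ ∑ b ∈ Finset.range m, |signedCount m b x| := by
    rw [key]
    refine (norm_sum_le _ _).trans (le_of_eq (Finset.sum_congr rfl fun b _ => ?_))
    rw [norm_mul, norm_pow, hζ1, one_pow, one_mul, Complex.norm_real, Real.norm_eq_abs]
  have h2 := Finset.sum_lt_sum_of_nonempty (s := Finset.range m)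
    (Finset.nonempty_range_iff.mpr hm.ne') fun b hb => hcon b (Finset.mem_range.mp hb)
  rw [Finset.sum_const, Finset.card_range, nsmul_eq_mul, mul_div_cancel₀ _ hm'.ne'] at h2
  linarith

/-- If `2^N ≡ 1 (mod m)`, the contribution to residue `a` of the block `[2^N r, 2^N (r+1))` is, up
to sign, the contribution of the initial block to residue `a - r`. -/
lemma signedCount_block (m a b N r : ℕ) (ha : a < m) (hb : b < m)
    (hN : 2 ^ N ≡ 1 [MOD m]) (hr : r + b = m + a) :
    |signedCount m a (2 ^ N * (r + 1)) - signedCount m a (2 ^ N * r)|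
      = |signedCount m b (2 ^ N)| := by
  have : signedCount m a (2 ^ N * (r + 1)) - signedCount m a (2 ^ N * r)
      = (-1) ^ s r * signedCount m b (2 ^ N) := by
    unfold signedCount
    rw [mul_add, mul_one, Finset.sum_range_add, add_sub_cancel_left, Finset.mul_sum]
    refine Finset.sum_congr rfl fun n hn => ?_
    have e : (2 ^ N * r + n) % m = a ↔ n % m = b := by
      have h1 : 2 ^ N * r + n ≡ r + n [MOD m] := by
        simpa using (hN.mul_right r).add_right n
      have h2 : r + b ≡ a [MOD m] := by rw [hr]; simp [Nat.ModEq]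
      constructor
      · intro h3
        have h4 : 2 ^ N * r + n ≡ a [MOD m] := by rw [Nat.ModEq, h3, Nat.mod_eq_of_lt ha]
        have h5 : r + n ≡ r + b [MOD m] := h1.symm.trans (h4.trans h2.symm)
        have h6 : n ≡ b [MOD m] := Nat.ModEq.add_left_cancel' r h5
        rwa [Nat.ModEq, Nat.mod_eq_of_lt hb] at h6
      · intro h3
        have h4 : n ≡ b [MOD m] := by rw [Nat.ModEq, h3, Nat.mod_eq_of_lt hb]
        have h5 := h1.trans ((h4.add_left r).trans h2)
        rwa [Nat.ModEq, Nat.mod_eq_of_lt ha] at h5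
    simp only [e]
    split_ifs
    · rw [s_block N r n (Finset.mem_range.mp hn), pow_add]
    · simp
  rw [this, abs_mul, abs_pow]
  simp

lemma half_signedCount_le (m a j x : ℕ) (hm : 0 < m) (ha : a < m) (hj : j < 2) :
    |signedCount m a x| / 2 - 1 / 2 ≤ |(T m a j x : ℝ) - x / (2 * m)| := by
  have hm' : (0 : ℝ) < m := by exact_mod_cast hm
  have h1 : 2 * (T m a j x : ℝ)
      = (Nat.count (· ≡ a [MOD m]) x : ℝ) + (-1) ^ j * signedCount m a x := by
    unfold T signedCount
    rw [Nat.count_eq_card_filter_range, Finset.card_filter, Finset.card_filter]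
    push_cast
    rw [Finset.mul_sum, Finset.mul_sum, ← Finset.sum_add_distrib]
    refine Finset.sum_congr rfl fun n _ => ?_
    have e : n ≡ a [MOD m] ↔ n % m = a := by rw [Nat.ModEq, Nat.mod_eq_of_lt ha]
    simp only [e]
    by_cases hn : n % m = a
    · rcases Nat.mod_two_eq_zero_or_one (s n) with h0 | h0
      · have : (-1 : ℝ) ^ s n = 1 := (Nat.even_iff.mpr h0).neg_one_pow
        interval_cases j <;> simp [hn, h0, this] <;> norm_num
      · have : (-1 : ℝ) ^ s n = -1 := (Nat.odd_iff.mpr h0).neg_one_pow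
        interval_cases j <;> simp [hn, h0, this] <;> norm_num
    · simp [hn]
  have h2 : |(Nat.count (· ≡ a [MOD m]) x : ℝ) - x / m| ≤ 1 := by
    rw [Nat.count_modEq_card x hm]
    have h3 : (x : ℝ) / m = (x / m : ℕ) + ((x % m : ℕ) : ℝ) / m := by
      have : (x : ℝ) = m * (x / m : ℕ) + (x % m : ℕ) := by exact_mod_cast (Nat.div_add_mod x m).symm
      rw [div_eq_iff hm'.ne', add_mul, div_mul_cancel₀ _ hm'.ne']
      linarith
    have h4 : ((x % m : ℕ) : ℝ) / m ≤ 1 := by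
      rw [div_le_one hm']
      exact_mod_cast (Nat.mod_lt x hm).le
    have h5 : 0 ≤ ((x % m : ℕ) : ℝ) / m := by positivity
    rw [h3]
    push_cast
    rw [abs_le]
    split_ifs <;> constructor <;> linarith
  have h3 : |signedCount m a x| = |(-1) ^ j * signedCount m a x| := by
    rw [abs_mul, abs_pow]; simp
  have h4 : (x : ℝ) / (2 * m) = (x / m) / 2 := by field_simp
  have h5 : (-1) ^ j * signedCount m a x = 2 * ((T m a j x : ℝ) - x / (2 * m))
      - ((Nat.count (· ≡ a [MOD m]) x : ℝ) - x / m) := by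
    rw [h4]; linarith
  have h6 := abs_sub (2 * ((T m a j x : ℝ) - x / (2 * m)))
    ((Nat.count (· ≡ a [MOD m]) x : ℝ) - x / m)
  rw [← h5, ← h3, abs_mul, abs_two] at h6
  linarith

lemma prod_periodic (ζ : ℂ) (h : ℕ) (hζ : ζ ^ 2 ^ h = ζ) (k : ℕ) :
    ∏ i ∈ Finset.range (h * k), (1 - ζ ^ 2 ^ i)
      = (∏ i ∈ Finset.range h, (1 - ζ ^ 2 ^ i)) ^ k := by
  induction k with
  | zero => simp
  | succ k ih =>
    rw [Nat.mul_succ, add_comm, Finset.prod_range_add, pow_succ', ← ih]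
    congr 1
    refine Finset.prod_congr rfl fun i _ => ?_
    rw [pow_add, pow_mul, hζ]

lemma sin_ne_zero (m l k : ℕ) (hm : 3 ≤ m) (hodd : Odd m) (hl : l ∈ Finset.Icc 1 (m - 1)) :
    Real.sin (Real.pi * l * 2 ^ k / m) ≠ 0 := by
  have hm' : (m : ℝ) ≠ 0 := by positivity
  rw [Finset.mem_Icc] at hl
  intro h0
  obtain ⟨n, hn⟩ := Real.sin_eq_zero_iff.mp h0
  rw [eq_div_iff hm'] at hn
  have h1 : (n : ℝ) * m = l * 2 ^ k := by
    apply mul_left_cancel₀ Real.pi_ne_zero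
    linarith
  have h2 : n * (m : ℤ) = ((l * 2 ^ k : ℕ) : ℤ) := by push_cast; exact_mod_cast h1
  have h3 : m ∣ l * 2 ^ k := Int.natCast_dvd_natCast.mp ⟨n, by rw [← h2, mul_comm]⟩
  have hc : Nat.Coprime m (2 ^ k) := (Nat.coprime_two_right.mpr hodd).pow_right k
  have := Nat.le_of_dvd (by omega) (hc.dvd_of_dvd_mul_right h3)
  omega

/-- One period of the product has modulus `2^{h α_l}`, where `α_l` is the exponent attached to `l`. -/
lemma norm_prod_eq (m l h : ℕ) (hm : 3 ≤ m) (hodd : Odd m) (hl : l ∈ Finset.Icc 1 (m - 1))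
    (hh : 0 < h) :
    ‖∏ i ∈ Finset.range h,
        (1 - Complex.exp (Complex.I * ((2 * Real.pi * l / m : ℝ) : ℂ)) ^ 2 ^ i)‖
      = (2 : ℝ) ^ ((h : ℝ) * (1 + (1 / (h * Real.log 2)) *
        ∑ k ∈ Finset.range h, Real.log |Real.sin (Real.pi * l * 2 ^ k / m)|)) := by
  have hh' : (h : ℝ) ≠ 0 := by positivity
  have hlog : Real.log 2 ≠ 0 := (Real.log_pos (by norm_num)).ne'
  have e1 : Real.log 2 * ((h : ℝ) * (1 + (1 / (h * Real.log 2)) *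
        ∑ k ∈ Finset.range h, Real.log |Real.sin (Real.pi * l * 2 ^ k / m)|))
      = ∑ k ∈ Finset.range h, (Real.log 2 + Real.log |Real.sin (Real.pi * l * 2 ^ k / m)|) := by
    rw [Finset.sum_add_distrib, Finset.sum_const, Finset.card_range, nsmul_eq_mul]
    field_simp
  rw [Real.rpow_def_of_pos (by norm_num), e1, Real.exp_sum, norm_prod]
  refine Finset.prod_congr rfl fun i _ => ?_
  rw [Real.exp_add, Real.exp_log (by norm_num),
    Real.exp_log (abs_pos.mpr (sin_ne_zero m l i hm hodd hl)), ← Complex.exp_nat_mul,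
    norm_sub_rev]
  have e2 : ((2 ^ i : ℕ) : ℂ) * (Complex.I * ((2 * Real.pi * l / m : ℝ) : ℂ))
      = Complex.I * ((2 * (Real.pi * l * 2 ^ i / m) : ℝ) : ℂ) := by
    push_cast; ring
  rw [e2, Complex.norm_exp_I_mul_ofReal_sub_one, Real.norm_eq_abs, abs_mul, abs_two,
    mul_div_cancel_left₀ _ (two_ne_zero)]

/-- Lower-bound half of Theorem 1: for odd `m ≥ 3`,
`T_{m,a}^{(j)}(x) - x/(2m) = Ω(x^{α-ε})` for every `ε > 0`: there is `c > 0` and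
arbitrarily large `x` with `|T_{m,a}^{(j)}(x) - x/(2m)| ≥ c x^{α-ε}`, where
`α = max_{1 ≤ l ≤ m-1} (1 + (1/(h ln 2)) Σ_{k<h} ln |sin (π l 2^k / m)|)` and
`h` is the multiplicative order of `2` mod `m`. -/
theorem gelfond_exact_exponent_lower
    (m : ℕ) (hm : 3 ≤ m) (hodd : Odd m)
    (a : ℕ) (ha : a < m) (j : ℕ) (hj : j < 2)
    (h : ℕ) (hh : h = orderOf (2 : ZMod m))
    (α : ℝ)
    (hα : IsGreatest { y : ℝ | ∃ l ∈ Finset.Icc 1 (m - 1),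
      y = 1 + (1 / (h * Real.log 2)) *
        ∑ k ∈ Finset.range h, Real.log |Real.sin (Real.pi * l * 2 ^ k / m)| } α)
    (ε : ℝ) (hε : 0 < ε) :
    ∃ c : ℝ, 0 < c ∧ ∀ X : ℕ, ∃ x : ℕ, X ≤ x ∧
      c * (x : ℝ) ^ (α - ε) ≤ |(T m a j x : ℝ) - x / (2 * m)| := by
  have hm0 : 0 < m := by omega
  have hm' : (0 : ℝ) < m := by exact_mod_cast hm0
  rcases le_or_gt (α - ε) 0 with hβ | hβ
  · -- For odd `x` the integer `2 m T - x` is odd, hence of absolute value at least `1`.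
    refine ⟨1 / (2 * m), by positivity, fun X => ⟨2 * X + 1, by omega, ?_⟩⟩
    have h1 : ((2 * X + 1 : ℕ) : ℝ) ^ (α - ε) ≤ 1 :=
      Real.rpow_le_one_of_one_le_of_nonpos (by exact_mod_cast Nat.le_add_left 1 (2 * X)) hβ
    have h2 : (1 : ℝ) ≤ |2 * m * (T m a j (2 * X + 1) : ℝ) - (2 * X + 1 : ℕ)| := by
      have h3 : (2 * m * (T m a j (2 * X + 1)) - (2 * X + 1 : ℕ) : ℤ) ≠ 0 := by
        rw [mul_assoc]
        push_cast
        omega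
      exact_mod_cast Int.one_le_abs h3
    have h4 : (T m a j (2 * X + 1) : ℝ) - (2 * X + 1 : ℕ) / (2 * m)
        = (1 / (2 * m)) * (2 * m * (T m a j (2 * X + 1) : ℝ) - (2 * X + 1 : ℕ)) := by
      field_simp
    rw [h4, abs_mul, abs_of_pos (by positivity : (0 : ℝ) < 1 / (2 * m))]
    exact mul_le_mul_of_nonneg_left (h1.trans h2) (by positivity)
  · have hα0 : 0 < α := by linarith
    obtain ⟨⟨l, hl, hαl⟩, -⟩ := hα
    have hh0 : 0 < h := by
      have hu : ((ZMod.unitOfCoprime 2 (Nat.coprime_two_left.mpr hodd) : (ZMod m)ˣ) : ZMod m) = 2 :=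
        by simp
      have : NeZero m := ⟨hm0.ne'⟩
      rw [hh, ← hu, orderOf_units]
      exact orderOf_pos _
    have h2h : 2 ^ h ≡ 1 [MOD m] := by
      rw [← ZMod.natCast_eq_natCast_iff]
      push_cast
      rw [hh, pow_orderOf_eq_one]
    set ζ : ℂ := Complex.exp (Complex.I * ((2 * Real.pi * l / m : ℝ) : ℂ)) with hζdef
    have hζ1 : ‖ζ‖ = 1 := by rw [hζdef, mul_comm, Complex.norm_exp_ofReal_mul_I]
    have hζm : ζ ^ m = 1 := by
      rw [hζdef, ← Complex.exp_nat_mul, Complex.exp_eq_one_iff]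
      refine ⟨l, ?_⟩
      have : (m : ℂ) ≠ 0 := by exact_mod_cast hm0.ne'
      push_cast
      field_simp
    have hζh : ζ ^ 2 ^ h = ζ := by
      rw [pow_eq_pow_mod _ hζm, h2h, Nat.mod_eq_of_lt (by omega), pow_one]
    set B : ℝ := (2 : ℝ) ^ ((h : ℝ) * α) with hB
    have hnorm : ∀ k, ‖∑ n ∈ Finset.range (2 ^ (h * k)), (-1 : ℂ) ^ s n * ζ ^ n‖ = B ^ k := by
      intro k
      rw [sum_sign_mul_pow, prod_periodic ζ h hζh, norm_pow, hζdef,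
        norm_prod_eq m l h hm hodd hl hh0, ← hαl]
    have hB1 : 1 < B := Real.one_lt_rpow (by norm_num) (by positivity)
    refine ⟨1 / (8 * m * (2 * m : ℝ) ^ α), by positivity, fun X => ?_⟩
    obtain ⟨k, hkX, hkB⟩ : ∃ k : ℕ, X ≤ k ∧ 4 * (m : ℝ) ≤ B ^ k :=
      ((Filter.eventually_ge_atTop X).and
        ((tendsto_pow_atTop_atTop_of_one_lt hB1).eventually_ge_atTop _)).exists
    obtain ⟨b, hb, hbig⟩ := exists_large_residue m hm0 ζ hζm hζ1 (2 ^ (h * k))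
    rw [hnorm] at hbig
    have hN : 2 ^ (h * k) ≡ 1 [MOD m] := by
      rw [pow_mul]
      simpa using h2h.pow k
    obtain ⟨r, hr⟩ : ∃ r, r + b = m + a := ⟨m + a - b, by omega⟩
    have hblock := signedCount_block m a b (h * k) r ha hb hN hr
    -- One of the two ends of the block carries at least half of the block sum.
    obtain ⟨q, hq1, hq2, hq⟩ : ∃ q : ℕ, 1 ≤ q ∧ q ≤ 2 * m ∧
        B ^ k / (2 * m) ≤ |signedCount m a (2 ^ (h * k) * q)| := by
      by_contra! hcon
      have h1 := hcon r (by omega) (by omega)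
      have h2 := hcon (r + 1) (by omega) (by omega)
      have h3 := abs_sub (signedCount m a (2 ^ (h * k) * (r + 1)))
        (signedCount m a (2 ^ (h * k) * r))
      have h4 : B ^ k / m = B ^ k / (2 * m) + B ^ k / (2 * m) := by field_simp; norm_num
      linarith
    have hx1 : 1 ≤ 2 ^ (h * k) * q := Nat.mul_pos (by positivity) hq1
    refine ⟨2 ^ (h * k) * q, ?_, ?_⟩
    · calc X ≤ k := hkX
        _ ≤ h * k := Nat.le_mul_of_pos_left k hh0
        _ ≤ 2 ^ (h * k) := Nat.lt_two_pow_self.le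
        _ ≤ 2 ^ (h * k) * q := Nat.le_mul_of_pos_right _ hq1
    · have hT := half_signedCount_le m a j (2 ^ (h * k) * q) hm0 ha hj
      have hpow : ((2 ^ (h * k) * q : ℕ) : ℝ) ^ (α - ε) ≤ B ^ k * (2 * m : ℝ) ^ α := by
        calc ((2 ^ (h * k) * q : ℕ) : ℝ) ^ (α - ε) ≤ ((2 ^ (h * k) * q : ℕ) : ℝ) ^ α :=
              Real.rpow_le_rpow_of_exponent_le (by exact_mod_cast hx1) (by linarith)
          _ ≤ ((2 : ℝ) ^ (h * k) * (2 * m)) ^ α := by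
              apply Real.rpow_le_rpow (by positivity) _ hα0.le
              push_cast
              apply mul_le_mul_of_nonneg_left _ (by positivity)
              exact_mod_cast hq2
          _ = B ^ k * (2 * m : ℝ) ^ α := by
              rw [Real.mul_rpow (by positivity) (by positivity), hB, ← Real.rpow_natCast,
                ← Real.rpow_natCast, ← Real.rpow_mul (by norm_num), ← Real.rpow_mul (by norm_num)]
              congr 2
              push_cast
              ring
      have h5 : 1 / (8 * m * (2 * m : ℝ) ^ α) * ((2 ^ (h * k) * q : ℕ) : ℝ) ^ (α - ε)
          ≤ B ^ k / (8 * m) := by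
        calc _ ≤ 1 / (8 * m * (2 * m : ℝ) ^ α) * (B ^ k * (2 * m : ℝ) ^ α) :=
              mul_le_mul_of_nonneg_left hpow (by positivity)
          _ = B ^ k / (8 * m) := by
              have : (2 * m : ℝ) ^ α ≠ 0 := by positivity
              field_simp
      have h6 : B ^ k / (2 * m) = 4 * (B ^ k / (8 * m)) := by field_simp; norm_num
      have h7 : 1 / 2 ≤ B ^ k / (8 * m) := by
        rw [le_div_iff₀ (by positivity)]
        linarith
      linarith
end

section
/- Let p be an odd prime for which 2 is a semiprimitive root modulo p, i.e., 2 has multiplicative order (p−1)/2 modulo p and the congruence 2^x ≡ −1 (mod p) has no solution. Let a ∈ {0,1,…,p−1} and j ∈ {0,1}. Then for every ε > 0 one has T^{(j)}_{p,a}(x) − x/(2p) = Ω(x^{α−ε}); that is, there exist a constant c > 0 and arbitrarily large x with |T^{(j)}_{p,a}(x) − x/(2p)| ≥ c·x^{α−ε}, where α = ln p / ((p−1)·ln 2). (Lower-bound half of Theorem 3.) -/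
lemma sum_range_two_mul' (f : ℕ → ℂ) (m : ℕ) :
    ∑ n ∈ Finset.range (2 * m), f n = ∑ n ∈ Finset.range m, (f (2 * n) + f (2 * n + 1)) := by
  induction m with
  | zero => simp
  | succ m ih =>
    rw [Finset.sum_range_succ, ← ih, show 2 * (m + 1) = 2 * m + 1 + 1 by ring,
      Finset.sum_range_succ, Finset.sum_range_succ]
    ring

/-- The generating polynomial of the signs `(-1) ^ s n` over `n < 2 ^ k` factors. -/
lemma sum_sign_pow (k : ℕ) (z : ℂ) :
    ∑ n ∈ Finset.range (2 ^ k), (-1) ^ s n * z ^ n = ∏ i ∈ Finset.range k, (1 - z ^ 2 ^ i) := by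
  induction k generalizing z with
  | zero => simp [s]
  | succ k ih =>
    rw [pow_succ', sum_range_two_mul', Finset.prod_range_succ']
    have h : ∀ i, z ^ 2 ^ (i + 1) = (z ^ 2) ^ 2 ^ i := fun i => by
      rw [← pow_mul, pow_succ']
    simp only [h]
    rw [← ih (z ^ 2), Finset.sum_mul]
    refine Finset.sum_congr rfl fun n _ => ?_
    rw [s_two_mul, s_two_mul_add_one]
    ring

/-! ### Growth of `Re (A * P ^ k)` -/

/-- A sequence `Re (A * P ^ k)` with `Re A ≠ 0` and `P ≠ 0` is infinitely often of the order
`‖P‖ ^ k`: this is clear for real `P`, and for non-real `P` two consecutive terms cannot both be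
small, as `A * P ^ k` and `A * P ^ (k + 1)` would both be close to the imaginary axis. -/
lemma exists_re_large (A P : ℂ) (hA : A.re ≠ 0) (hP : P ≠ 0) :
    ∃ c : ℝ, 0 < c ∧ ∀ K : ℕ, ∃ k, K ≤ k ∧ c * ‖P‖ ^ k ≤ |(A * P ^ k).re| := by
  by_cases hi : P.im = 0
  · refine ⟨|A.re|, abs_pos.2 hA, fun K => ⟨K, le_rfl, ?_⟩⟩
    obtain ⟨x, rfl⟩ : ∃ x : ℝ, P = x := ⟨P.re, by apply Complex.ext <;> simp [hi]⟩
    rw [← Complex.ofReal_pow, Complex.re_mul_ofReal, abs_mul, Complex.norm_real, abs_pow,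
      Real.norm_eq_abs]
  · have hA0 : 0 < ‖A‖ := norm_pos_iff.2 fun h => hA (by simp [h])
    have hPn : 0 < ‖P‖ := norm_pos_iff.2 hP
    have hI : 0 < |P.im| := abs_pos.2 hi
    set M := |P.im| + |P.re| + ‖P‖ with hM
    have hM0 : 0 < M := by positivity
    refine ⟨‖A‖ * |P.im| / (2 * M), by positivity, fun K => ?_⟩
    by_contra! hcon
    have h1 := hcon K le_rfl
    have h2 := hcon (K + 1) (by omega)
    set z := A * P ^ K with hz
    have hzn : ‖z‖ = ‖A‖ * ‖P‖ ^ K := by rw [hz, norm_mul, norm_pow]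
    have hz0 : 0 < ‖z‖ := by rw [hzn]; positivity
    have hzP : A * P ^ (K + 1) = z * P := by rw [hz]; ring
    rw [hzP] at h2
    have h3 : z.im * P.im = z.re * P.re - (z * P).re := by
      rw [Complex.mul_re z P]; ring
    have h4 : |z.im| * |P.im| ≤ |z.re| * |P.re| + |(z * P).re| := by
      rw [← abs_mul, ← abs_mul, h3]; exact abs_sub _ _
    have h5 := Complex.norm_le_abs_re_add_abs_im z
    set d := ‖z‖ * |P.im| / (2 * M) with hd
    have h1' : |z.re| < d := by
      refine h1.trans_eq ?_
      rw [hd, hzn]; ring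
    have h2' : |(z * P).re| < d * ‖P‖ := by
      refine h2.trans_eq ?_
      rw [hd, hzn]; ring
    have h6 : d * (2 * M) = ‖z‖ * |P.im| := by rw [hd]; field_simp
    have hd0 : 0 < d := by positivity
    have h7 : ‖z‖ * |P.im| ≤ d * M := by
      calc ‖z‖ * |P.im| ≤ (|z.re| + |z.im|) * |P.im| := by gcongr
        _ ≤ |z.re| * |P.im| + (|z.re| * |P.re| + |(z * P).re|) := by linarith
        _ ≤ d * |P.im| + (d * |P.re| + d * ‖P‖) := by gcongr
        _ = d * M := by rw [hM]; ring
    nlinarith [mul_pos hd0 hM0]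

/-! ### Reduction to the signed count -/

/-- Up to `O(1)`, the deviation of `T` from `x / (2 * p)` is half the signed count. -/
lemma abs_T_ge (p a j x : ℕ) (hp : 0 < p) (ha : a < p) (hj : j < 2) :
    |∑ n ∈ Finset.range x, if n % p = a then (-1 : ℝ) ^ s n else 0| / 2 - 1 / 2 ≤
      |(T p a j x : ℝ) - x / (2 * p)| := by
  set S := ∑ n ∈ Finset.range x, if n % p = a then (-1 : ℝ) ^ s n else 0 with hS
  set N : ℕ := Nat.count (· ≡ a [MOD p]) x with hN
  have hpR : (0 : ℝ) < p := by exact_mod_cast hp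
  have hT : 2 * (T p a j x : ℝ) = N + (-1) ^ j * S := by
    have hN' : (N : ℝ) = ∑ n ∈ Finset.range x, if n % p = a then (1 : ℝ) else 0 := by
      rw [hN, Nat.count_eq_card_filter_range]
      simp [Nat.ModEq, Nat.mod_eq_of_lt ha]
    have hT' : (T p a j x : ℝ) =
        ∑ n ∈ Finset.range x, if n % p = a ∧ s n % 2 = j then (1 : ℝ) else 0 := by
      simp [T]
    rw [hN', hT', hS, Finset.mul_sum, Finset.mul_sum, ← Finset.sum_add_distrib]
    refine Finset.sum_congr rfl fun n _ => ?_
    by_cases h : n % p = a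
    · rcases Nat.mod_two_eq_zero_or_one (s n) with h2 | h2
      · have h3 : (-1 : ℝ) ^ s n = 1 := (Nat.even_iff.2 h2).neg_one_pow
        interval_cases j <;> simp [h, h2, h3]; norm_num
      · have h3 : (-1 : ℝ) ^ s n = -1 := (Nat.odd_iff.2 h2).neg_one_pow
        interval_cases j <;> simp [h, h2, h3]; norm_num
    · simp [h]
  have hc : |(N : ℝ) - x / p| ≤ 1 := by
    have h := Nat.count_modEq_card_eq_ceil x hp a
    rw [← hN, Nat.mod_eq_of_lt ha] at h
    have h1 := Int.le_ceil (((x : ℚ) - a) / p)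
    have h2 := Int.ceil_lt_add_one (((x : ℚ) - a) / p)
    rw [← h] at h1 h2
    have h1' : ((x : ℝ) - a) / p ≤ N := by exact_mod_cast h1
    have h2' : (N : ℝ) < ((x : ℝ) - a) / p + 1 := by exact_mod_cast h2
    have h3 : (a : ℝ) / p ≤ 1 := (div_le_one hpR).2 (by exact_mod_cast ha.le)
    have h4 : (0 : ℝ) ≤ (a : ℝ) / p := by positivity
    rw [sub_div] at h1' h2'
    rw [abs_le]; constructor <;> linarith
  have hsign : |(-1 : ℝ) ^ j * S| = |S| := by simp [abs_mul]
  have hkey : (-1 : ℝ) ^ j * S = 2 * ((T p a j x : ℝ) - x / (2 * p)) - (N - x / p) := by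
    have : (x : ℝ) / p = 2 * (x / (2 * p)) := by field_simp
    rw [mul_sub, hT, ← this]; ring
  have := abs_sub (2 * ((T p a j x : ℝ) - x / (2 * p))) (N - x / p)
  rw [← hkey, hsign, abs_mul, abs_two] at this
  linarith

/-! ### Products and sums over the powers of two modulo `p` -/

/-- If `2` is a semiprimitive root modulo `p`, the nonzero residues are the powers `2 ^ i` and their
negatives `-2 ^ i`, `i < (p - 1) / 2`, each occurring once. -/
@[to_additive]
lemma prod_nonzero {M : Type*} [CommMonoid M] (p : ℕ) [Fact p.Prime] (hodd : Odd p)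
    (hord : orderOf (2 : ZMod p) = (p - 1) / 2)
    (hneg : ¬ ∃ x : ℕ, (2 : ZMod p) ^ x = -1) (f : ZMod p → M) :
    ∏ l ∈ Finset.univ.erase 0, f l =
      ∏ i ∈ Finset.range ((p - 1) / 2), (f (2 ^ i) * f (-2 ^ i)) := by
  classical
  have hp : p.Prime := Fact.out
  have h2p : 2 < p := by
    have := hp.two_le
    obtain ⟨m, hm⟩ := hodd
    omega
  have h20 : (2 : ZMod p) ≠ 0 := by
    intro h
    have : ((2 : ℕ) : ZMod p) = 0 := by exact_mod_cast h
    rw [ZMod.natCast_eq_zero_iff] at this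
    exact absurd (Nat.le_of_dvd (by norm_num) this) (by omega)
  set r := (p - 1) / 2 with hr
  have hpr : p - 1 = 2 * r := by
    obtain ⟨m, hm⟩ := hodd
    omega
  have hpow : (2 : ZMod p) ^ r = 1 := by rw [← hord]; exact pow_orderOf_eq_one 2
  have hinj : Set.InjOn (fun i : ℕ => (2 : ZMod p) ^ i) (Finset.range r) := by
    have := pow_injOn_Iio_orderOf (x := (2 : ZMod p))
    rw [hord] at this
    intro i hi j hj hij
    exact this (by simpa using hi) (by simpa using hj) hij
  have hinj' : Set.InjOn (fun i : ℕ => -(2 : ZMod p) ^ i) (Finset.range r) :=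
    fun i hi j hj hij => hinj hi hj (neg_injective hij)
  set H := (Finset.range r).image (fun i : ℕ => (2 : ZMod p) ^ i) with hH
  set H' := (Finset.range r).image (fun i : ℕ => -(2 : ZMod p) ^ i) with hH'
  have hdisj : Disjoint H H' := by
    rw [Finset.disjoint_left]
    intro l hl hl'
    simp only [hH, hH', Finset.mem_image, Finset.mem_range] at hl hl'
    obtain ⟨i, hi, rfl⟩ := hl
    obtain ⟨j, hj, hij⟩ := hl'
    refine hneg ⟨i + (r - j), ?_⟩
    rw [pow_add, ← hij, neg_mul, ← pow_add, show j + (r - j) = r by omega, hpow]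
  have hunion : H ∪ H' = Finset.univ.erase 0 := by
    apply Finset.eq_of_subset_of_card_le
    · intro l hl
      simp only [hH, hH', Finset.mem_union, Finset.mem_image] at hl
      simp only [Finset.mem_erase, Finset.mem_univ, and_true]
      rcases hl with ⟨i, -, rfl⟩ | ⟨i, -, rfl⟩
      · exact pow_ne_zero _ h20
      · exact neg_ne_zero.2 (pow_ne_zero _ h20)
    · rw [Finset.card_union_of_disjoint hdisj, Finset.card_image_of_injOn hinj,
        Finset.card_image_of_injOn hinj', Finset.card_erase_of_mem (Finset.mem_univ _),
        Finset.card_univ, ZMod.card, Finset.card_range]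
      omega
  rw [← hunion, Finset.prod_union hdisj, Finset.prod_image hinj, Finset.prod_image hinj',
    Finset.prod_mul_distrib]

lemma prod_range_periodic (f : ℕ → ℂ) (r : ℕ) (hf : ∀ i, f (i + r) = f i) (k : ℕ) :
    ∏ i ∈ Finset.range (r * k), f i = (∏ i ∈ Finset.range r, f i) ^ k := by
  induction k with
  | zero => simp
  | succ k ih =>
    have h : ∀ k x, f (r * k + x) = f x := by
      intro k
      induction k with
      | zero => simp
      | succ k ihk =>
        intro x
        rw [show r * (k + 1) + x = (r * k + x) + r by ring, hf, ihk]
    rw [mul_add, mul_one, Finset.prod_range_add, ih, pow_succ]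
    simp only [h]

/-- The product of `1 - ζ ^ (l * 2 ^ i)` over one period of `2 ^ i`, where `ζ = exp (2 * π * i / p)`;
when `2` is a semiprimitive root modulo `p`, its values at nonzero `l` are `Q p 1` and its conjugate. -/
noncomputable def Q (p : ℕ) [NeZero p] (l : ZMod p) : ℂ :=
  ∏ i ∈ Finset.range ((p - 1) / 2), (1 - ZMod.stdAddChar (l * 2 ^ i))

lemma Q_two_pow (p : ℕ) [NeZero p] (hpow : (2 : ZMod p) ^ ((p - 1) / 2) = 1) (j : ℕ) :
    Q p (2 ^ j) = Q p 1 := by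
  induction j with
  | zero => simp
  | succ j ih =>
    rw [← ih]
    unfold Q
    rcases Nat.eq_zero_or_pos ((p - 1) / 2) with h0 | h0
    · simp [h0]
    · obtain ⟨t, ht⟩ : ∃ t, (p - 1) / 2 = t + 1 := ⟨(p - 1) / 2 - 1, by omega⟩
      rw [ht] at hpow ⊢
      rw [Finset.prod_range_succ, Finset.prod_range_succ']
      have h1 : (2 : ZMod p) ^ (j + 1) * 2 ^ t = 2 ^ j * 2 ^ 0 := by
        rw [pow_succ, mul_assoc, ← pow_succ', hpow, pow_zero]
      rw [h1]
      congr 1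
      refine Finset.prod_congr rfl fun i _ => ?_
      rw [show (2 : ZMod p) ^ (j + 1) * 2 ^ i = 2 ^ j * 2 ^ (i + 1) by ring]

lemma stdAddChar_neg_eq_conj (p : ℕ) [NeZero p] (l : ZMod p) :
    ZMod.stdAddChar (-l) = (starRingEnd ℂ) (ZMod.stdAddChar l) :=
  AddChar.map_neg_eq_conj _ _

lemma Q_neg (p : ℕ) [NeZero p] (l : ZMod p) : Q p (-l) = (starRingEnd ℂ) (Q p l) := by
  unfold Q
  rw [map_prod]
  refine Finset.prod_congr rfl fun i _ => ?_
  rw [neg_mul, stdAddChar_neg_eq_conj, map_sub, map_one]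

lemma prod_one_sub_stdAddChar (p : ℕ) [Fact p.Prime] :
    ∏ l ∈ Finset.univ.erase (0 : ZMod p), (1 - ZMod.stdAddChar l : ℂ) = p := by
  have hp : p.Prime := Fact.out
  obtain ⟨n, rfl⟩ : ∃ n, p = n + 1 := ⟨p - 1, by have := hp.pos; omega⟩
  have hprim : IsPrimitiveRoot (ZMod.stdAddChar (1 : ZMod (n + 1)) : ℂ) (n + 1) := by
    have := ZMod.stdAddChar_coe (N := n + 1) 1
    have h2 := Complex.isPrimitiveRoot_exp (n + 1) (by omega)
    simp only [Int.cast_one, mul_one] at this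
    rwa [this]
  have h := hprim.prod_one_sub_pow_eq_order
  push_cast
  rw [← h]
  symm
  refine Finset.prod_bij (fun k _ => ((k + 1 : ℕ) : ZMod (n + 1))) ?_ ?_ ?_ ?_
  · intro k hk
    simp only [Finset.mem_erase, Finset.mem_univ, and_true, ne_eq, ZMod.natCast_eq_zero_iff]
    intro hd
    have := Nat.le_of_dvd (by omega) hd
    simp at hk; omega
  · intro k hk l hl hkl
    rw [ZMod.natCast_eq_natCast_iff'] at hkl
    simp at hk hl
    rw [Nat.mod_eq_of_lt (by omega), Nat.mod_eq_of_lt (by omega)] at hkl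
    omega
  · intro l hl
    have hl0 : l ≠ 0 := by simpa using hl
    have hv : l.val ≠ 0 := by rwa [ne_eq, ZMod.val_eq_zero]
    have hlt := ZMod.val_lt l
    refine ⟨l.val - 1, by simp; omega, ?_⟩
    rw [Nat.sub_add_cancel (by omega), ZMod.natCast_zmod_val]
  · intro k _
    rw [← AddChar.map_nsmul_eq_pow, nsmul_one]

/-- The conjugate numbers `Q p 1` and `Q p (-1)` multiply to `∏_{l ≠ 0} (1 - ζ ^ l) = p`, as each
nonzero residue occurs exactly once. -/
lemma norm_Q_one (p : ℕ) [Fact p.Prime] (hodd : Odd p)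
    (hord : orderOf (2 : ZMod p) = (p - 1) / 2)
    (hneg : ¬ ∃ x : ℕ, (2 : ZMod p) ^ x = -1) : ‖Q p 1‖ = √p := by
  have h := prod_nonzero p hodd hord hneg (fun l => (1 - ZMod.stdAddChar l : ℂ))
  rw [prod_one_sub_stdAddChar, Finset.prod_mul_distrib] at h
  have h1 : Q p 1 * (starRingEnd ℂ) (Q p 1) = p := by
    rw [← Q_neg, h]; simp [Q]
  rw [Complex.mul_conj, Complex.normSq_eq_norm_sq] at h1
  have h2 : ‖Q p 1‖ ^ 2 = p := by exact_mod_cast h1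
  rw [← h2, Real.sqrt_sq (norm_nonneg _)]

/-- The Gaussian period `∑ ζ ^ (-a * 2 ^ i)` over the subgroup generated by `2`. -/
noncomputable def A (p : ℕ) [NeZero p] (a : ZMod p) : ℂ :=
  ∑ i ∈ Finset.range ((p - 1) / 2), ZMod.stdAddChar (-(2 ^ i * a))

lemma A_re_ne_zero (p : ℕ) [Fact p.Prime] (hodd : Odd p)
    (hord : orderOf (2 : ZMod p) = (p - 1) / 2)
    (hneg : ¬ ∃ x : ℕ, (2 : ZMod p) ^ x = -1) (a : ZMod p) : (A p a).re ≠ 0 := by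
  have hp : p.Prime := Fact.out
  have h := sum_nonzero p hodd hord hneg (fun l => (ZMod.stdAddChar (-(l * a)) : ℂ))
  have h1 : A p a + (starRingEnd ℂ) (A p a) =
      ∑ l ∈ Finset.univ.erase (0 : ZMod p), (ZMod.stdAddChar (-(l * a)) : ℂ) := by
    rw [h, Finset.sum_add_distrib, A, map_sum]
    congr 1
    refine Finset.sum_congr rfl fun i _ => ?_
    rw [neg_mul (2 ^ i) a, stdAddChar_neg_eq_conj p (-(2 ^ i * a))]
  have h2 := Finset.add_sum_erase Finset.univ
    (fun l : ZMod p => (ZMod.stdAddChar (-(l * a)) : ℂ)) (Finset.mem_univ 0)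
  have h3 := AddChar.sum_mulShift (-a) (ZMod.isPrimitive_stdAddChar p)
  simp only [mul_neg] at h3
  rw [← h1, h3, Complex.add_conj] at h2
  intro h0
  rw [h0] at h2
  simp only [zero_mul, neg_zero, AddChar.map_zero_eq_one, mul_zero, Complex.ofReal_zero,
    add_zero, ZMod.card] at h2
  split_ifs at h2 with ha
  · have : (1 : ℕ) = p := by exact_mod_cast h2
    exact hp.one_lt.ne this
  · simp at h2

/-! ### The signed count at powers of `2 ^ ((p - 1) / 2)` -/

/-- Fourier inversion on `ZMod p` evaluates the signed count at the powers of `2 ^ ((p - 1) / 2)`. -/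
lemma signed_count_eq (p : ℕ) [Fact p.Prime] (hodd : Odd p)
    (hord : orderOf (2 : ZMod p) = (p - 1) / 2)
    (hneg : ¬ ∃ x : ℕ, (2 : ZMod p) ^ x = -1) (a : ℕ) (ha : a < p) (k : ℕ) (hk : k ≠ 0) :
    (p : ℝ) * (∑ n ∈ Finset.range (2 ^ ((p - 1) / 2 * k)),
      if n % p = a then (-1 : ℝ) ^ s n else 0) = 2 * (A p a * Q p 1 ^ k).re := by
  have hp : p.Prime := Fact.out
  have hpow : (2 : ZMod p) ^ ((p - 1) / 2) = 1 := by rw [← hord]; exact pow_orderOf_eq_one 2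
  have hr : 0 < (p - 1) / 2 := by
    have := hp.two_le
    obtain ⟨m, hm⟩ := hodd
    omega
  have hF : ∀ l : ZMod p, ∑ n ∈ Finset.range (2 ^ ((p - 1) / 2 * k)),
      (-1 : ℂ) ^ s n * ZMod.stdAddChar (l * (n : ZMod p)) = Q p l ^ k := by
    intro l
    have h1 : ∀ n : ℕ, (ZMod.stdAddChar (l * (n : ZMod p)) : ℂ) = ZMod.stdAddChar l ^ n := fun n => by
      rw [← AddChar.map_nsmul_eq_pow, nsmul_eq_mul, mul_comm]
    simp only [h1]
    rw [sum_sign_pow, Q, ← prod_range_periodic]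
    · refine Finset.prod_congr rfl fun i _ => ?_
      rw [← h1]; push_cast; rfl
    · intro i
      rw [pow_add, hpow, mul_one]
  have hQ0 : Q p 0 = 0 := by
    rw [Q, Finset.prod_eq_zero (Finset.mem_range.2 hr)]
    simp
  have hind : ∀ n : ℕ, (p : ℂ) * (if n % p = a then (-1 : ℂ) ^ s n else 0) =
      ∑ l : ZMod p, ZMod.stdAddChar (-(l * (a : ZMod p))) *
        ((-1 : ℂ) ^ s n * ZMod.stdAddChar (l * (n : ZMod p))) := by
    intro n
    have h3 := AddChar.sum_mulShift ((n : ZMod p) - a) (ZMod.isPrimitive_stdAddChar p)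
    have h4 : ((n : ZMod p) - a = 0) ↔ n % p = a := by
      rw [sub_eq_zero, ZMod.natCast_eq_natCast_iff', Nat.mod_eq_of_lt ha]
    have h5 : ∀ l : ZMod p,
        ZMod.stdAddChar (-(l * (a : ZMod p))) * ((-1 : ℂ) ^ s n * ZMod.stdAddChar (l * (n : ZMod p))) =
        (-1 : ℂ) ^ s n * ZMod.stdAddChar (l * ((n : ZMod p) - (a : ZMod p))) := by
      intro l
      rw [mul_sub, sub_eq_add_neg, AddChar.map_add_eq_mul]
      ring
    simp only [h5]
    rw [← Finset.mul_sum, h3]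
    simp only [h4, ZMod.card]
    split_ifs <;> simp [mul_comm]
  apply Complex.ofReal_injective
  push_cast
  simp only [apply_ite Complex.ofReal, Complex.ofReal_pow, Complex.ofReal_neg, Complex.ofReal_one,
    Complex.ofReal_zero]
  rw [Finset.mul_sum]
  simp only [hind]
  rw [Finset.sum_comm]
  simp only [← Finset.mul_sum, hF]
  rw [← Finset.add_sum_erase Finset.univ _ (Finset.mem_univ 0), hQ0, zero_pow hk, mul_zero,
    zero_add, sum_nonzero p hodd hord hneg]
  have hc := Complex.add_conj (A p a * Q p 1 ^ k)
  push_cast at hc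
  rw [← hc, Finset.sum_add_distrib]
  congr 1
  · simp only [Q_two_pow p hpow]
    rw [← Finset.sum_mul, A]
  · simp only [Q_neg, Q_two_pow p hpow]
    rw [← Finset.sum_mul, map_mul, map_pow, A, map_sum]
    congr 1
    refine Finset.sum_congr rfl fun i _ => ?_
    rw [neg_mul (2 ^ i) (a : ZMod p), stdAddChar_neg_eq_conj p (-(2 ^ i * (a : ZMod p)))]

/-- Lower-bound half of Theorem 3: if `p` is an odd prime for which `2` is a
semiprimitive root (order `(p-1)/2` and `2^x ≡ -1 (mod p)` unsolvable), then
`T_{p,a}^{(j)}(x) - x/(2p) = Ω(x^{α-ε})` for every `ε > 0`, where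
`α = ln p / ((p-1) ln 2)`. -/
theorem gelfond_exponent_semiprimitive_root_lower
    (p : ℕ) (hp : p.Prime) (hodd : Odd p)
    (hord : orderOf (2 : ZMod p) = (p - 1) / 2)
    (hneg : ¬ ∃ x : ℕ, (2 : ZMod p) ^ x = -1)
    (a : ℕ) (ha : a < p) (j : ℕ) (hj : j < 2)
    (ε : ℝ) (hε : 0 < ε) :
    ∃ c : ℝ, 0 < c ∧ ∀ X : ℕ, ∃ x : ℕ, X ≤ x ∧
      c * (x : ℝ) ^ (Real.log p / ((p - 1) * Real.log 2) - ε) ≤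
        |(T p a j x : ℝ) - x / (2 * p)| := by
  have : Fact p.Prime := ⟨hp⟩
  have hp2 : 2 < p := by
    have := hp.two_le
    obtain ⟨m, hm⟩ := hodd
    omega
  have hpR : (2 : ℝ) < p := by exact_mod_cast hp2
  set r := (p - 1) / 2 with hr
  have hpr : p = 2 * r + 1 := by
    obtain ⟨m, hm⟩ := hodd
    omega
  have hr0 : 0 < r := by omega
  have hnorm := norm_Q_one p hodd hord hneg
  have hsq1 : 1 < √(p : ℝ) := by
    rw [Real.lt_sqrt (by norm_num)]; linarith
  obtain ⟨c, hc, hlarge⟩ := exists_re_large (A p a) (Q p 1) (A_re_ne_zero p hodd hord hneg a)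
    (by rw [← norm_pos_iff, hnorm]; linarith)
  rw [hnorm] at hlarge
  refine ⟨c / (2 * p), by positivity, fun X => ?_⟩
  -- `K` is so large that the main term `c / p * √p ^ k` is at least `1` for `k ≥ K`.
  obtain ⟨K, hK⟩ := pow_unbounded_of_one_lt (p / c) hsq1
  obtain ⟨k, hk, hre⟩ := hlarge (max (X + 1) K)
  have hkX : X + 1 ≤ k := (le_max_left _ _).trans hk
  have hkK : K ≤ k := (le_max_right _ _).trans hk
  refine ⟨2 ^ (r * k), ?_, ?_⟩
  · calc X ≤ k := by omega
      _ ≤ r * k := Nat.le_mul_of_pos_left k hr0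
      _ ≤ 2 ^ (r * k) := Nat.lt_two_pow_self.le
  have hS := signed_count_eq p hodd hord hneg a ha k (by omega)
  rw [← hr] at hS
  refine le_trans ?_ (abs_T_ge p a j (2 ^ (r * k)) hp.pos ha hj)
  set S := ∑ n ∈ Finset.range (2 ^ (r * k)), if n % p = a then (-1 : ℝ) ^ s n else 0
  have hx : ((2 ^ (r * k) : ℕ) : ℝ) ^ (Real.log p / ((p - 1) * Real.log 2) - ε) ≤
      √(p : ℝ) ^ k := by
    have h1 : (1 : ℝ) ≤ ((2 ^ (r * k) : ℕ) : ℝ) := by exact_mod_cast Nat.one_le_two_pow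
    refine (Real.rpow_le_rpow_of_exponent_le h1 (sub_le_self _ hε.le)).trans_eq ?_
    have hl2 : Real.log 2 ≠ 0 := (Real.log_pos (by norm_num)).ne'
    have hp1 : (p : ℝ) - 1 = 2 * r := by
      have : (p : ℝ) = 2 * r + 1 := by exact_mod_cast hpr
      linarith
    have hrR : (r : ℝ) ≠ 0 := by exact_mod_cast hr0.ne'
    have hp0 : (0 : ℝ) < p := by linarith
    rw [Real.rpow_def_of_pos (by linarith), Real.sqrt_eq_rpow, ← Real.rpow_natCast,
      ← Real.rpow_mul hp0.le, Real.rpow_def_of_pos hp0, hp1]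
    push_cast
    rw [Real.log_pow]
    congr 1
    push_cast
    field_simp
  have hSabs : (p : ℝ) * |S| = 2 * |(A p a * Q p 1 ^ k).re| := by
    rw [← abs_of_pos (show (0 : ℝ) < p by linarith), ← abs_mul, hS, abs_mul, abs_two]
  have hSge : 2 * (c / p * √(p : ℝ) ^ k) ≤ |S| := by
    have : 2 * (c / p * √(p : ℝ) ^ k) = 2 * (c * √(p : ℝ) ^ k) / p := by ring
    rw [this, div_le_iff₀ (by linarith)]
    linarith
  have h1 : 1 ≤ c / p * √(p : ℝ) ^ k := by
    have h2 : p / c ≤ √(p : ℝ) ^ k := hK.le.trans (pow_le_pow_right₀ hsq1.le hkK)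
    calc (1 : ℝ) = c / p * (p / c) := by field_simp
      _ ≤ _ := by gcongr
  calc _ ≤ c / (2 * p) * √(p : ℝ) ^ k := by gcongr
    _ = c / p * √(p : ℝ) ^ k / 2 := by field_simp
    _ ≤ |S| / 2 - 1 / 2 := by linarith
end

section
/- Let m > 1 be an even integer, a ∈ {0,1,…,m−1}, and x a natural number. Then S_{m,a}(2x) = (−1)^a · S_{m/2, ⌊a/2⌋}(x). -/
/-- Newman-like sum `S_{m,a}(x) = Σ_{0 ≤ n < x, n ≡ a (mod m)} (−1)^{s(n)}`. -/
def S (m a x : ℕ) : ℤ :=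
  ∑ n ∈ (Finset.range x).filter (fun n => n % m = a), (-1 : ℤ) ^ (s n)

lemma two_mul_add_one_mod (n k : ℕ) (hk : 0 < k) :
    (2 * n + 1) % (2 * k) = 2 * (n % k) + 1 := by
  have hlt := Nat.mod_lt n hk
  have hdiv := Nat.div_add_mod n k
  have e : 2 * n + 1 = (2 * (n % k) + 1) + 2 * k * (n / k) := by
    rw [mul_assoc]; omega
  rw [e, Nat.add_mul_mod_self_left, Nat.mod_eq_of_lt (by omega)]

/-- Formula (5): for even `m > 1` and `a < m`,
`S_{m,a}(2x) = (−1)^a S_{m/2, ⌊a/2⌋}(x)`. -/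
theorem S_even_modulus_reduction (m : ℕ) (hm : 1 < m) (heven : Even m)
    (a : ℕ) (ha : a < m) (x : ℕ) :
    S m a (2 * x) = (-1 : ℤ) ^ a * S (m / 2) (a / 2) x := by
  obtain ⟨k, rfl⟩ := heven
  rw [← two_mul] at *
  have hk : 0 < k := by omega
  rw [Nat.mul_div_cancel_left k (by norm_num)]
  simp only [S, Finset.sum_filter]
  induction x with
  | zero => simp
  | succ x ih =>
    rw [show 2 * (x + 1) = 2 * x + 1 + 1 by ring, Finset.sum_range_succ, Finset.sum_range_succ,
      Finset.sum_range_succ, ih, s_two_mul, s_two_mul_add_one, Nat.mul_mod_mul_left,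
      two_mul_add_one_mod x k hk, mul_add, add_assoc]
    congr 1
    -- exactly one of the residues `2 * (x % k)`, `2 * (x % k) + 1` has the parity of `a`
    rcases Nat.even_or_odd' a with ⟨b, rfl | rfl⟩
    · have h1 : 2 * (x % k) + 1 ≠ 2 * b := by omega
      have h2 : 2 * (x % k) = 2 * b ↔ x % k = 2 * b / 2 := by omega
      simp only [h1, h2, if_false, add_zero, pow_mul]
      simp
    · have h1 : 2 * (x % k) ≠ 2 * b + 1 := by omega
      have h2 : 2 * (x % k) + 1 = 2 * b + 1 ↔ x % k = (2 * b + 1) / 2 := by omega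
      simp only [h1, h2, if_false, zero_add, pow_succ, pow_mul]
      split_ifs <;> simp
end

section
/- Let p be an odd prime for which 2 is a semiprimitive root modulo p, i.e., 2 has multiplicative order (p−1)/2 modulo p and there is no natural number x with 2^x ≡ −1 (mod p). Then Π_{k=0}^{(p−3)/2} |sin(π·2^k / p)| = √p / 2^{(p−1)/2}. -/
/-!
Write `S = {2 ^ k : k < (p - 1) / 2}` in `ZMod p`. Since `-1` is not a power of `2`, the sets `S`
and `-S` are disjoint, and by the order hypothesis each has `(p - 1) / 2` elements, so together they
exhaust the nonzero residues. The value `|sin (π n / p)|` depends only on `±n` modulo `p`, so the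
square of the wanted product is `∏_{l=1}^{p-1} |sin (π l / p)| = p / 2 ^ (p - 1)`
(`prod_absSin_ne_zero`). The latter follows from `∏_{l=1}^{p-1} (1 - ζ ^ l) = p` for a primitive
`p`-th root of unity `ζ`, by taking norms.
-/

/-- The function `n ↦ |sin (π n / p)|` on residues modulo `p`, evaluated at the least nonnegative
representative. -/
noncomputable def absSin (p : ℕ) (a : ZMod p) : ℝ := |Real.sin (Real.pi * a.val / p)|

/-- `absSin` does not depend on the representative, as `|sin|` is `π`-periodic. -/
lemma absSin_natCast (p : ℕ) (hp : p ≠ 0) (n : ℕ) :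
    absSin p (n : ZMod p) = |Real.sin (Real.pi * n / p)| := by
  have hp' : (p : ℝ) ≠ 0 := by exact_mod_cast hp
  have h : Real.pi * n / p = Real.pi * (n % p : ℕ) / p + (n / p : ℕ) * Real.pi := by
    have h2 : (n : ℝ) = (n % p : ℕ) + p * (n / p : ℕ) := by exact_mod_cast (Nat.mod_add_div n p).symm
    rw [h2]
    field_simp
  rw [absSin, ZMod.val_natCast, h, Real.sin_add_nat_mul_pi, abs_mul, abs_pow]
  simp

lemma absSin_neg (p : ℕ) (hp : p ≠ 0) (a : ZMod p) : absSin p (-a) = absSin p a := by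
  have : NeZero p := ⟨hp⟩
  have hp' : (p : ℝ) ≠ 0 := by exact_mod_cast hp
  have h1 : (-a) = ((p - a.val : ℕ) : ZMod p) := by
    rw [Nat.cast_sub (ZMod.val_lt a).le]
    simp
  have h2 : Real.pi * ((p - a.val : ℕ) : ℝ) / p = Real.pi - Real.pi * a.val / p := by
    rw [Nat.cast_sub (ZMod.val_lt a).le]
    field_simp
  rw [h1, absSin_natCast p hp, h2, Real.sin_pi_sub, absSin]

lemma norm_one_sub_exp (p n : ℕ) :
    ‖1 - Complex.exp (2 * Real.pi * Complex.I / p) ^ n‖ = 2 * |Real.sin (Real.pi * n / p)| := by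
  have h : Complex.exp (2 * Real.pi * Complex.I / p) ^ n
      = Complex.exp (Complex.I * ((2 * (Real.pi * n / p) : ℝ) : ℂ)) := by
    rw [← Complex.exp_nat_mul]
    congr 1
    push_cast
    ring
  rw [h, norm_sub_rev, Complex.norm_exp_I_mul_ofReal_sub_one, norm_mul]
  simp

/-- The classical identity `∏_{l=1}^{p-1} sin (π l / p) = p / 2 ^ (p - 1)`, indexed by nonzero
residues and cleared of denominators. -/
lemma prod_absSin_ne_zero (p : ℕ) [NeZero p] :
    2 ^ (p - 1) * ∏ a ∈ (Finset.univ : Finset (ZMod p)).erase 0, absSin p a = p := by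
  have hp : p ≠ 0 := NeZero.ne p
  have hμ := Complex.isPrimitiveRoot_exp p hp
  obtain ⟨m, rfl⟩ := Nat.exists_eq_succ_of_ne_zero hp
  have key := congrArg norm hμ.prod_one_sub_pow_eq_order
  rw [norm_prod, Finset.prod_congr rfl (fun k _ => norm_one_sub_exp (m + 1) (k + 1)),
    Finset.prod_mul_distrib, Finset.prod_const, Finset.card_range] at key
  have hbij : ∏ a ∈ (Finset.univ : Finset (ZMod (m + 1))).erase 0, absSin (m + 1) a
      = ∏ k ∈ Finset.range m, |Real.sin (Real.pi * ((k + 1 : ℕ) : ℝ) / ((m + 1 : ℕ) : ℝ))| := by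
    symm
    refine Finset.prod_bij (fun k _ => ((k + 1 : ℕ) : ZMod (m + 1))) ?_ ?_ ?_ ?_
    · intro k hk
      have hk := Finset.mem_range.1 hk
      rw [Finset.mem_erase]
      refine ⟨fun h => ?_, Finset.mem_univ _⟩
      have := Nat.le_of_dvd (by omega) ((ZMod.natCast_eq_zero_iff _ _).1 h)
      omega
    · intro k hk l hl h
      have hk := Finset.mem_range.1 hk
      have hl := Finset.mem_range.1 hl
      have h := congrArg ZMod.val h
      rw [ZMod.val_natCast, ZMod.val_natCast, Nat.mod_eq_of_lt (by omega),
        Nat.mod_eq_of_lt (by omega)] at h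
      omega
    · intro a ha
      have h0 : a.val ≠ 0 := fun h => (Finset.mem_erase.1 ha).1 ((ZMod.val_eq_zero a).1 h)
      have h1 := ZMod.val_lt a
      refine ⟨a.val - 1, Finset.mem_range.2 (by omega), ?_⟩
      rw [Nat.sub_add_cancel (by omega)]
      exact ZMod.natCast_zmod_val a
    · intro k _
      exact (absSin_natCast (m + 1) hp (k + 1)).symm
  rw [hbij]
  have hn : ‖((m : ℂ) + 1)‖ = (m : ℝ) + 1 := by
    exact_mod_cast Complex.norm_natCast (m + 1)
  rw [hn] at key
  simpa using key

/-- If `p` is an odd prime for which `2` is a semiprimitive root (order `(p−1)/2`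
and `2^x ≡ −1 (mod p)` unsolvable), then
`Π_{k=0}^{(p−3)/2} |sin(π 2^k / p)| = √p / 2^{(p−1)/2}`. -/
theorem prod_abs_sin_two_pow_semiprimitive (p : ℕ) (hp : p.Prime) (hodd : Odd p)
    (hord : orderOf (2 : ZMod p) = (p - 1) / 2)
    (hneg : ¬ ∃ x : ℕ, (2 : ZMod p) ^ x = -1) :
    ∏ k ∈ Finset.range ((p - 1) / 2), |Real.sin (Real.pi * 2 ^ k / p)| =
      Real.sqrt p / 2 ^ ((p - 1) / 2) := by
  classical
  have : Fact p.Prime := ⟨hp⟩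
  set m := (p - 1) / 2 with hm
  have hpm : p - 1 = m + m := by
    obtain ⟨t, rfl⟩ := hodd
    omega
  have h2 : (2 : ZMod p) ≠ 0 := by
    intro h
    rw [h] at hord
    have h0 : orderOf (0 : ZMod p) = 0 := orderOf_eq_zero_iff'.2 fun n hn => by
      simp [zero_pow hn.ne']
    have := hp.two_le
    omega
  have hinj : Set.InjOn (fun k : ℕ => (2 : ZMod p) ^ k) (Finset.range m) := by
    intro k hk l hl h
    apply pow_injOn_Iio_orderOf (x := (2 : ZMod p)) _ _ h
    · simpa [hord] using hk
    · simpa [hord] using hl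
  set S := (Finset.range m).image (fun k : ℕ => (2 : ZMod p) ^ k) with hS
  set T := S.image (fun a => -a) with hT
  have hScard : S.card = m := by
    rw [hS, Finset.card_image_of_injOn hinj, Finset.card_range]
  have hTcard : T.card = m := by
    rw [hT, Finset.card_image_of_injective _ neg_injective, hScard]
  have hdisj : Disjoint S T := by
    rw [Finset.disjoint_left]
    intro a haS haT
    simp only [hT, hS, Finset.mem_image, Finset.mem_range] at haS haT
    obtain ⟨k, hk, rfl⟩ := haS
    obtain ⟨_, ⟨l, hl, rfl⟩, h⟩ := haT
    -- `-2 ^ l = 2 ^ k` and `2 ^ m = 1` give `2 ^ (k + (m - l)) = -1`.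
    refine hneg ⟨k + (m - l), ?_⟩
    rw [pow_add, ← h, neg_mul, ← pow_add, Nat.add_sub_cancel' hl.le, ← hord, pow_orderOf_eq_one]
  have hunion : S ∪ T = (Finset.univ : Finset (ZMod p)).erase 0 := by
    apply Finset.eq_of_subset_of_card_le
    · intro a ha
      simp only [hT, hS, Finset.mem_union, Finset.mem_image, Finset.mem_range] at ha
      rw [Finset.mem_erase]
      refine ⟨?_, Finset.mem_univ _⟩
      rcases ha with ⟨k, _, rfl⟩ | ⟨_, ⟨k, _, rfl⟩, rfl⟩
      · exact pow_ne_zero _ h2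
      · exact neg_ne_zero.2 (pow_ne_zero _ h2)
    · rw [Finset.card_union_of_disjoint hdisj, hScard, hTcard,
        Finset.card_erase_of_mem (Finset.mem_univ _), Finset.card_univ, ZMod.card, hpm]
  set P := ∏ k ∈ Finset.range m, |Real.sin (Real.pi * 2 ^ k / p)| with hP
  have hPS : ∏ a ∈ S, absSin p a = P := by
    rw [hS, Finset.prod_image hinj]
    refine Finset.prod_congr rfl fun k _ => ?_
    have := absSin_natCast p hp.ne_zero (2 ^ k)
    push_cast at this
    exact this
  have hPT : ∏ a ∈ T, absSin p a = P := by
    rw [hT, Finset.prod_image neg_injective.injOn, ← hPS]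
    exact Finset.prod_congr rfl fun a _ => absSin_neg p hp.ne_zero a
  have key := prod_absSin_ne_zero p
  rw [← hunion, Finset.prod_union hdisj, hPS, hPT, hpm, pow_add] at key
  have hP0 : 0 ≤ P := Finset.prod_nonneg fun _ _ => abs_nonneg _
  rw [eq_div_iff (by positivity), eq_comm, Real.sqrt_eq_iff_mul_self_eq (by positivity) (by positivity)]
  linarith
end

section
/- One has S_{17,0}(x) = O(x^{α}) as x → ∞, where α = ln(17 + 4√17) / ln 256 = 0.633220353…. -/
/-- The exponential sum `∑_{n < x} (-1)^{s n} ω^n` attached to the Thue–Morse sequence. -/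
noncomputable def G (ω : ℂ) (x : ℕ) : ℂ := ∑ n ∈ Finset.range x, (-1 : ℂ) ^ s n * ω ^ n

lemma G_two_mul (ω : ℂ) (x : ℕ) : G ω (2 * x) = (1 - ω) * G (ω ^ 2) x := by
  induction x with
  | zero => simp [G]
  | succ x ih =>
    rw [G] at ih ⊢
    rw [show 2 * (x + 1) = 2 * x + 1 + 1 by ring, Finset.sum_range_succ, Finset.sum_range_succ, ih,
      s_two_mul, s_two_mul_add_one, G, G, Finset.sum_range_succ]
    ring

/-- The product `∏_{k < 8} (1 - ω^(2^k))`, with exponents reduced modulo `17`. -/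
noncomputable def P (ω : ℂ) : ℂ :=
  (1 - ω) * (1 - ω ^ 2) * (1 - ω ^ 4) * (1 - ω ^ 8) *
    ((1 - ω ^ 16) * (1 - ω ^ 15) * (1 - ω ^ 13) * (1 - ω ^ 9))

lemma G_256 {ω : ℂ} (h : ω ^ 17 = 1) (x : ℕ) : G ω (256 * x) = P ω * G ω x := by
  have red : ∀ q r : ℕ, ω ^ (17 * q + r) = ω ^ r := fun q r => by
    rw [pow_add, pow_mul, h, one_pow, one_mul]
  have h32 : ω ^ 32 = ω ^ 15 := red 1 15
  have h64 : ω ^ 64 = ω ^ 13 := red 3 13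
  have h128 : ω ^ 128 = ω ^ 9 := red 7 9
  have h256 : ω ^ 256 = ω := (red 15 1).trans (pow_one ω)
  rw [show 256 * x = 2 * (2 * (2 * (2 * (2 * (2 * (2 * (2 * x))))))) by ring]
  iterate 8 rw [G_two_mul]
  simp only [← pow_mul, Nat.reduceMul]
  rw [h32, h64, h128, h256, P]
  ring

/-- The quadratic relation `(P(ω) - 17)² = 16 · 17` at the primitive 17th roots of unity. -/
lemma P_sq {ω : ℂ} (h : ω ^ 17 = 1) (h1 : ω ≠ 1) : (P ω - 17) ^ 2 = 272 := by
  have h0 : ∑ i ∈ Finset.range 17, ω ^ i = 0 := by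
    have := mul_geom_sum ω 17
    rw [h, sub_self] at this
    exact (mul_eq_zero.mp this).resolve_left (sub_ne_zero.mpr h1)
  simp only [Finset.sum_range_succ, Finset.sum_range_zero] at h0
  -- `g` is the Gauss period of the subgroup generated by `2`, i.e. of the quadratic residues.
  obtain ⟨g, hg⟩ : ∃ g, g = ω + ω ^ 2 + ω ^ 4 + ω ^ 8 + ω ^ 16 + ω ^ 15 + ω ^ 13 + ω ^ 9 := ⟨_, rfl⟩
  have hgg : g ^ 2 + g = 4 := by
    grind
  have hP : P ω = 13 - 8 * g := by
    have hA : (1 - ω) * (1 - ω ^ 16) * ((1 - ω ^ 4) * (1 - ω ^ 13)) =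
        4 - 2 * (ω + ω ^ 16 + ω ^ 4 + ω ^ 13) + (ω ^ 5 + ω ^ 12 + ω ^ 3 + ω ^ 14) := by
      clear h0 hg hgg h1
      grind
    have hB : (1 - ω ^ 2) * (1 - ω ^ 15) * ((1 - ω ^ 8) * (1 - ω ^ 9)) =
        4 - 2 * (ω ^ 2 + ω ^ 15 + ω ^ 8 + ω ^ 9) + (ω ^ 10 + ω ^ 7 + ω ^ 6 + ω ^ 11) := by
      clear h0 hg hgg h1
      grind
    have hAB : P ω = ((1 - ω) * (1 - ω ^ 16) * ((1 - ω ^ 4) * (1 - ω ^ 13))) *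
        ((1 - ω ^ 2) * (1 - ω ^ 15) * ((1 - ω ^ 8) * (1 - ω ^ 9))) := by
      rw [P]; ac_rfl
    -- The last summand vanishes; with it, the identity holds already modulo `ω^17 - 1`.
    have hC : P ω = 13 - 8 * (ω + ω ^ 2 + ω ^ 4 + ω ^ 8 + ω ^ 16 + ω ^ 15 + ω ^ 13 + ω ^ 9) +
        3 * (0 + ω ^ 0 + ω ^ 1 + ω ^ 2 + ω ^ 3 + ω ^ 4 + ω ^ 5 + ω ^ 6 + ω ^ 7 + ω ^ 8 + ω ^ 9 +
          ω ^ 10 + ω ^ 11 + ω ^ 12 + ω ^ 13 + ω ^ 14 + ω ^ 15 + ω ^ 16) := by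
      rw [hAB, hA, hB]
      clear h0 hg hgg h1 hA hB hAB
      grind
    rw [hC, h0, hg]
    ring
  rw [hP]
  linear_combination 64 * hgg

lemma norm_P_le {ω : ℂ} (h : ω ^ 17 = 1) : ‖P ω‖ ≤ 17 + 4 * √17 := by
  by_cases h1 : ω = 1
  · subst h1
    simp [P]
    positivity
  · have hs : ((√17 : ℝ) : ℂ) ^ 2 = 17 := by
      rw [← Complex.ofReal_pow, Real.sq_sqrt (by norm_num)]; norm_num
    have hn : ‖P ω - 17‖ ≤ 4 * √17 := by
      apply le_of_eq
      have : (P ω - 17) ^ 2 = ((4 * √17 : ℝ) : ℂ) ^ 2 := by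
        rw [P_sq h h1]; push_cast; linear_combination -16 * hs
      have := congrArg norm this
      rw [norm_pow, norm_pow, Complex.norm_real, Real.norm_of_nonneg (by positivity)] at this
      exact (pow_left_inj₀ (norm_nonneg _) (by positivity) two_ne_zero).mp this
    calc ‖P ω‖ = ‖17 + (P ω - 17)‖ := by ring_nf
      _ ≤ ‖(17 : ℂ)‖ + ‖P ω - 17‖ := norm_add_le _ _
      _ ≤ 17 + 4 * √17 := by rw [Complex.norm_ofNat]; linarith

lemma norm_G_add_sub_le {ω : ℂ} (h : ‖ω‖ = 1) (x r : ℕ) : ‖G ω (x + r) - G ω x‖ ≤ r := by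
  rw [G, G, Finset.sum_range_add, add_sub_cancel_left]
  refine (norm_sum_le_of_le (n := fun _ => (1 : ℝ)) _ fun n _ => ?_).trans (by simp)
  simp [h]

/-- The exponent `α`, characterised by `256^α = 17 + 4 √17`. -/
noncomputable def alpha : ℝ := Real.log (17 + 4 * √17) / Real.log 256

lemma alpha_nonneg : 0 ≤ alpha := by
  have : (0 : ℝ) ≤ √17 := Real.sqrt_nonneg _
  exact div_nonneg (Real.log_nonneg (by linarith)) (Real.log_nonneg (by norm_num))

lemma rpow_alpha : (256 : ℝ) ^ alpha = 17 + 4 * √17 := by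
  rw [Real.rpow_def_of_pos (by norm_num), alpha, mul_div_cancel₀ _ (by positivity),
    Real.exp_log (by positivity)]

/-- The subtracted constant `8` absorbs the error term `256` of each induction step. -/
lemma norm_G_le {ω : ℂ} (h : ω ^ 17 = 1) (x : ℕ) (hx : 0 < x) :
    ‖G ω x‖ ≤ 264 * (x : ℝ) ^ alpha - 8 := by
  have hω : ‖ω‖ = 1 := Complex.norm_eq_one_of_pow_eq_one h (by norm_num)
  induction x using Nat.strong_induction_on with
  | _ x ih =>
  by_cases hlt : x < 256
  · have h1 : ‖G ω x‖ ≤ x := by simpa [G] using norm_G_add_sub_le hω 0 x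
    have h2 : (1 : ℝ) ≤ (x : ℝ) ^ alpha :=
      Real.one_le_rpow (by exact_mod_cast hx) alpha_nonneg
    have h3 : (x : ℝ) ≤ 256 := by exact_mod_cast hlt.le
    linarith
  · obtain ⟨q, r, hr, rfl⟩ : ∃ q r, r < 256 ∧ x = 256 * q + r :=
      ⟨x / 256, x % 256, Nat.mod_lt _ (by norm_num), (Nat.div_add_mod _ _).symm⟩
    have hq := ih q (by omega) (by omega)
    have h1 := norm_G_add_sub_le hω (256 * q) r
    have h3 : (r : ℝ) ≤ 256 := by exact_mod_cast hr.le
    have h4 : ‖G ω (256 * q)‖ ≤ (17 + 4 * √17) * (264 * (q : ℝ) ^ alpha - 8) := by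
      rw [G_256 h, norm_mul]
      exact mul_le_mul (norm_P_le h) hq (norm_nonneg _) (by positivity)
    have h5 : (17 + 4 * √17) * (q : ℝ) ^ alpha ≤ ((256 * q + r : ℕ) : ℝ) ^ alpha := by
      rw [← rpow_alpha, ← Real.mul_rpow (by norm_num) (by positivity)]
      refine Real.rpow_le_rpow (by positivity) ?_ alpha_nonneg
      push_cast
      have : (0 : ℝ) ≤ r := by positivity
      linarith
    have h6 : (4 : ℝ) ≤ √17 := Real.le_sqrt_of_sq_le (by norm_num)
    have h7 : ‖G ω (256 * q + r)‖ ≤ ‖G ω (256 * q)‖ + ‖G ω (256 * q + r) - G ω (256 * q)‖ := by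
      simpa using norm_add_le (G ω (256 * q)) (G ω (256 * q + r) - G ω (256 * q))
    nlinarith

/-- The roots of unity filter. -/
lemma sum_G_eq {ζ : ℂ} (hζ : IsPrimitiveRoot ζ 17) (x : ℕ) :
    ∑ j ∈ Finset.range 17, G (ζ ^ j) x = 17 * (S 17 0 x : ℂ) := by
  simp only [G]
  rw [Finset.sum_comm, S, Int.cast_sum, Finset.sum_filter, Finset.mul_sum]
  refine Finset.sum_congr rfl fun n _ => ?_
  rw [← Finset.mul_sum]
  have hc : ∀ j, (ζ ^ j) ^ n = (ζ ^ n) ^ j := fun j => by rw [← pow_mul, ← pow_mul, mul_comm]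
  simp only [hc]
  split_ifs with hn
  · rw [(hζ.pow_eq_one_iff_dvd n).mpr (Nat.dvd_of_mod_eq_zero hn)]
    simp [mul_comm]
  · have h1 : ζ ^ n ≠ 1 := fun h => hn (Nat.mod_eq_zero_of_dvd ((hζ.pow_eq_one_iff_dvd n).mp h))
    have := mul_geom_sum (ζ ^ n) 17
    rw [← pow_mul, mul_comm n, pow_mul, hζ.pow_eq_one, one_pow, sub_self] at this
    rw [(mul_eq_zero.mp this).resolve_left (sub_ne_zero.mpr h1)]
    simp

/-- Formula (37): `S_{17,0}(x) = O(x^α)` with `α = ln(17 + 4√17)/ln 256`. -/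
theorem S_seventeen_bigO :
    (fun x : ℕ => (S 17 0 x : ℝ)) =O[Filter.atTop]
      fun x : ℕ =>
        (x : ℝ) ^ (Real.log (17 + 4 * Real.sqrt 17) / Real.log 256) := by
  refine Asymptotics.IsBigO.of_bound 264 ?_
  filter_upwards [Filter.eventually_gt_atTop 0] with x hx
  change _ ≤ 264 * ‖(x : ℝ) ^ alpha‖
  rw [Real.norm_of_nonneg (by positivity : (0 : ℝ) ≤ (x : ℝ) ^ alpha)]
  have hζ := Complex.isPrimitiveRoot_exp 17 (by norm_num)
  have h1 := congrArg norm (sum_G_eq hζ x)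
  have h2 : ‖(S 17 0 x : ℂ)‖ = ‖(S 17 0 x : ℝ)‖ := by
    rw [← Complex.norm_real]; simp
  rw [norm_mul, Complex.norm_ofNat, h2] at h1
  have h3 := norm_sum_le_of_le (Finset.range 17) (fun j _ => norm_G_le (ω := _ ^ j)
    (by rw [← pow_mul, mul_comm, pow_mul, hζ.pow_eq_one, one_pow]) x hx)
  rw [h1, Finset.sum_const, Finset.card_range, nsmul_eq_mul] at h3
  push_cast at h3
  linarith
end

section
/- For m = 17 (where the multiplicative order of 2 modulo 17 is h = 8), the exact exponent α(17) = max_{1 ≤ l ≤ 16} ( 1 + (1/(8·ln 2)) · Σ_{k=0}^{7} ln |sin(π l 2^k / 17)| ) equals ln(17 + 4√17) / ln 256, and this maximum is attained at l = 3 (and not at l = 1). -/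
/-!
Write `x = π l / 17` and `a_j = 2 cos (2 j x)`. Since `2 ^ 4 ≡ -1 (mod 17)`, the factors
`|sin (2 ^ k x)|` have period `4` in `k`, so the orbit sum of logarithms is the logarithm of
`∏_{k < 4} sin² (2 ^ k x)`, and `4 sin² (2 ^ k x) = 2 - a_{2 ^ k}`. Hence the exponent attached to `l`
is `ln P / ln 256` with `P = (2 - a₁)(2 - a₂)(2 - a₄)(2 - a₈)`.

Let `S = a₁ + a₂ + a₄ + a₈` be the quadratic Gaussian period. As polynomials in `c = a₁` modulo
the minimal polynomial of `2 cos (2π / 17)`, one has `S² + S = 4` and `P = 13 - 8 S`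
(`period_of_minpoly`). So `S = (-1 ± √17) / 2` and `P = 17 ∓ 4√17`: every exponent is at most
`ln (17 + 4√17) / ln 256`, with equality exactly when `S < 0`. Elementary estimates of cosines
give `S < 0` for `l = 3` and `S > 0` for `l = 1`.
-/

/-- The Gaussian period `a₁ + a₂ + a₄ + a₈`, where `a_j = 2 cos (2 π l j / 17)`. -/
noncomputable def gaussPeriod (l : ℕ) : ℝ :=
  2 * Real.cos (2 * (Real.pi * l / 17)) + 2 * Real.cos (4 * (Real.pi * l / 17)) +
    2 * Real.cos (8 * (Real.pi * l / 17)) + 2 * Real.cos (16 * (Real.pi * l / 17))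

/-- The relations satisfied by the period and by the product of the `2 - a_j`, derived from
`a₉ = a₈`; this hypothesis is `(c - 2) M(c) = 0`, where `M` is the minimal polynomial of
`2 cos (2 π / 17)`. -/
lemma period_of_minpoly (c a2 a4 a8 : ℝ) (h2 : a2 = c ^ 2 - 2) (h4 : a4 = a2 ^ 2 - 2)
    (h8 : a8 = a4 ^ 2 - 2) (h9 : (c ^ 3 - 3 * c) ^ 3 - 3 * (c ^ 3 - 3 * c) = a8) (hc : c ≠ 2) :
    (c + a2 + a4 + a8) ^ 2 + (c + a2 + a4 + a8) = 4 ∧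
      (2 - c) * (2 - a2) * (2 - a4) * (2 - a8) = 13 - 8 * (c + a2 + a4 + a8) := by
  subst h2 h4 h8
  have hM : 1 - 4 * c - 10 * c ^ 2 + 10 * c ^ 3 + 15 * c ^ 4 - 6 * c ^ 5 - 7 * c ^ 6 + c ^ 7
      + c ^ 8 = 0 := by
    apply mul_left_cancel₀ (sub_ne_zero.mpr hc)
    linear_combination h9
  -- The coefficients below are the quotients of polynomial division by `M`.
  constructor
  · linear_combination (2 + 13 * c - 22 * c ^ 2 - 16 * c ^ 3 + 22 * c ^ 4 + 7 * c ^ 5 - 8 * c ^ 6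
      - c ^ 7 + c ^ 8) * hM
  · linear_combination (3 + 20 * c - 42 * c ^ 2 + 2 * c ^ 3 + 23 * c ^ 4 - 6 * c ^ 5 - 3 * c ^ 6
      + c ^ 7) * hM

lemma two_cos_double (y : ℝ) : 2 * Real.cos (2 * y) = (2 * Real.cos y) ^ 2 - 2 := by
  rw [Real.cos_two_mul]; ring

lemma two_cos_triple (y : ℝ) :
    2 * Real.cos (3 * y) = (2 * Real.cos y) ^ 3 - 3 * (2 * Real.cos y) := by
  rw [Real.cos_three_mul]; ring

lemma four_sin_sq (y : ℝ) : 4 * Real.sin y ^ 2 = 2 - 2 * Real.cos (2 * y) := by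
  rw [Real.cos_two_mul, Real.cos_sq']; ring

lemma gaussPeriod_relations (l : ℕ) (h1 : 1 ≤ l) (h16 : l ≤ 16) :
    gaussPeriod l ^ 2 + gaussPeriod l = 4 ∧
      256 * (Real.sin (Real.pi * l / 17) ^ 2 * Real.sin (2 * (Real.pi * l / 17)) ^ 2 *
        Real.sin (4 * (Real.pi * l / 17)) ^ 2 * Real.sin (8 * (Real.pi * l / 17)) ^ 2) =
        13 - 8 * gaussPeriod l := by
  have h1' : (1 : ℝ) ≤ l := by exact_mod_cast h1
  have h16' : (l : ℝ) ≤ 16 := by exact_mod_cast h16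
  have hpi := Real.pi_pos
  unfold gaussPeriod
  have hx17 : 17 * (Real.pi * l / 17) = l * Real.pi := by ring
  have hx0 : 0 < Real.pi * l / 17 := by positivity
  have hxpi : Real.pi * l / 17 < Real.pi := by
    rw [div_lt_iff₀ (by norm_num)]
    nlinarith
  generalize Real.pi * (l : ℝ) / 17 = x at *
  have hs := Real.sin_pos_of_pos_of_lt_pi hx0 hxpi
  have hc : 2 * Real.cos (2 * x) ≠ 2 := by
    have := four_sin_sq x
    nlinarith [pow_pos hs 2]
  have e2 : 2 * Real.cos (4 * x) = (2 * Real.cos (2 * x)) ^ 2 - 2 := by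
    rw [← two_cos_double]; ring_nf
  have e4 : 2 * Real.cos (8 * x) = (2 * Real.cos (4 * x)) ^ 2 - 2 := by
    rw [← two_cos_double]; ring_nf
  have e8 : 2 * Real.cos (16 * x) = (2 * Real.cos (8 * x)) ^ 2 - 2 := by
    rw [← two_cos_double]; ring_nf
  -- `a₉ = a₈`, because `18 x = 2 π l - 16 x`.
  have e9 : ((2 * Real.cos (2 * x)) ^ 3 - 3 * (2 * Real.cos (2 * x))) ^ 3 -
      3 * ((2 * Real.cos (2 * x)) ^ 3 - 3 * (2 * Real.cos (2 * x))) = 2 * Real.cos (16 * x) := by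
    rw [← two_cos_triple, ← two_cos_triple]
    have : 3 * (3 * (2 * x)) = l * (2 * Real.pi) - 16 * x := by linear_combination 2 * hx17
    rw [this, Real.cos_nat_mul_two_pi_sub]
  obtain ⟨hS, hP⟩ := period_of_minpoly _ _ _ _ e2 e4 e8 e9 hc
  refine ⟨hS, ?_⟩
  rw [← hP]
  have f1 := four_sin_sq x
  have f2 := four_sin_sq (2 * x)
  have f4 := four_sin_sq (4 * x)
  have f8 := four_sin_sq (8 * x)
  rw [show 2 * (2 * x) = 4 * x by ring] at f2
  rw [show 2 * (4 * x) = 8 * x by ring] at f4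
  rw [show 2 * (8 * x) = 16 * x by ring] at f8
  rw [← f1, ← f2, ← f4, ← f8]
  ring

/-- The orbit of `l` under doubling closes up to sign after four steps: `16 y ≡ -y` modulo `π`
whenever `17 y` is a multiple of `π`. -/
lemma abs_sin_sixteen (y : ℝ) (n : ℕ) (hy : 17 * y = n * Real.pi) :
    |Real.sin (16 * y)| = |Real.sin y| := by
  rw [show 16 * y = n * Real.pi - y by linear_combination hy, Real.sin_nat_mul_pi_sub]
  simp [abs_mul]

lemma thirteen_sub_pos {l : ℕ} (h1 : 1 ≤ l) (h16 : l ≤ 16) : 0 < 13 - 8 * gaussPeriod l := by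
  obtain ⟨hS, hP⟩ := gaussPeriod_relations l h1 h16
  have h0 : 0 ≤ 13 - 8 * gaussPeriod l := by rw [← hP]; positivity
  rcases h0.lt_or_eq with h | h
  · exact h
  · have : gaussPeriod l = 13 / 8 := by linarith
    rw [this] at hS
    norm_num at hS

/-- The exponent attached to `l`, in terms of the Gaussian period. -/
lemma exponent_eq (l : ℕ) (h1 : 1 ≤ l) (h16 : l ≤ 16) :
    1 + (1 / (8 * Real.log 2)) *
        ∑ k ∈ Finset.range 8, Real.log |Real.sin (Real.pi * l * 2 ^ k / 17)| =
      Real.log (13 - 8 * gaussPeriod l) / Real.log 256 := by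
  obtain ⟨-, hP⟩ := gaussPeriod_relations l h1 h16
  have hpos := thirteen_sub_pos h1 h16
  rw [← hP] at hpos ⊢
  have hk : ∀ k : ℕ, Real.pi * l * 2 ^ k / 17 = 2 ^ k * (Real.pi * l / 17) := fun k => by ring
  have hx17 : 17 * (Real.pi * l / 17) = l * Real.pi := by ring
  simp only [hk, Finset.sum_range_succ, Finset.sum_range_zero]
  generalize Real.pi * (l : ℝ) / 17 = x at *
  have g0 := abs_sin_sixteen x l hx17
  have g1 := abs_sin_sixteen (2 * x) (2 * l) (by push_cast; linear_combination 2 * hx17)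
  have g2 := abs_sin_sixteen (4 * x) (4 * l) (by push_cast; linear_combination 4 * hx17)
  have g3 := abs_sin_sixteen (8 * x) (8 * l) (by push_cast; linear_combination 8 * hx17)
  simp only [← mul_assoc] at g1 g2 g3
  norm_num at g1 g2 g3
  norm_num
  rw [← Real.log_abs (Real.sin (16 * x)), ← Real.log_abs (Real.sin (32 * x)),
    ← Real.log_abs (Real.sin (64 * x)), ← Real.log_abs (Real.sin (128 * x)), g0, g1, g2, g3]
  simp only [Real.log_abs]
  have n0 : Real.sin x ≠ 0 := by rintro h; simp [h] at hpos
  have n1 : Real.sin (2 * x) ≠ 0 := by rintro h; simp [h] at hpos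
  have n2 : Real.sin (4 * x) ≠ 0 := by rintro h; simp [h] at hpos
  have n3 : Real.sin (8 * x) ≠ 0 := by rintro h; simp [h] at hpos
  rw [Real.log_mul (by norm_num) (by positivity), Real.log_mul (by positivity) (by positivity),
    Real.log_mul (by positivity) (by positivity), Real.log_mul (by positivity) (by positivity)]
  simp only [Real.log_pow]
  have h256 : Real.log 256 = 8 * Real.log 2 := by
    rw [show (256 : ℝ) = 2 ^ 8 by norm_num, Real.log_pow]; norm_num
  have hl2 : Real.log 2 ≠ 0 := (Real.log_pos (by norm_num)).ne'
  rw [h256]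
  field_simp
  push_cast
  ring

lemma gaussPeriod_three_neg : gaussPeriod 3 < 0 := by
  have hpi := Real.pi_pos
  unfold gaussPeriod
  push_cast
  have b1 : Real.cos (2 * (Real.pi * 3 / 17)) < 1 / 2 := by
    rw [← Real.cos_pi_div_three]
    exact Real.cos_lt_cos_of_nonneg_of_le_pi (by positivity) (by linarith) (by linarith)
  have b2 : Real.cos (4 * (Real.pi * 3 / 17)) < -(1 / 2) := by
    rw [← Real.cos_pi_div_three, ← Real.cos_pi_sub]
    exact Real.cos_lt_cos_of_nonneg_of_le_pi (by linarith) (by linarith) (by linarith)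
  have b3 : Real.cos (8 * (Real.pi * 3 / 17)) < 0 :=
    Real.cos_neg_of_pi_div_two_lt_of_lt (by linarith) (by linarith)
  have b4 : Real.cos (16 * (Real.pi * 3 / 17)) < 0 := by
    rw [← Real.cos_sub_two_pi]
    exact Real.cos_neg_of_pi_div_two_lt_of_lt (by linarith) (by linarith)
  linarith

lemma gaussPeriod_one_pos : 0 < gaussPeriod 1 := by
  have hpi := Real.pi_pos
  unfold gaussPeriod
  push_cast
  have b1 : 1 / 2 < Real.cos (2 * (Real.pi * 1 / 17)) := by
    rw [← Real.cos_pi_div_three]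
    exact Real.cos_lt_cos_of_nonneg_of_le_pi (by positivity) (by linarith) (by linarith)
  have b2 : 1 / 2 < Real.cos (4 * (Real.pi * 1 / 17)) := by
    rw [← Real.cos_pi_div_three]
    exact Real.cos_lt_cos_of_nonneg_of_le_pi (by positivity) (by linarith) (by linarith)
  have b3 : 0 < Real.cos (8 * (Real.pi * 1 / 17)) :=
    Real.cos_pos_of_mem_Ioo ⟨by linarith, by linarith⟩
  have b4 := Real.neg_one_le_cos (16 * (Real.pi * 1 / 17))
  linarith

lemma exponent_three :
    1 + (1 / (8 * Real.log 2)) *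
        ∑ k ∈ Finset.range 8, Real.log |Real.sin (Real.pi * (3 : ℕ) * 2 ^ k / 17)| =
      Real.log (17 + 4 * Real.sqrt 17) / Real.log 256 := by
  rw [exponent_eq 3 (by norm_num) (by norm_num)]
  obtain ⟨hS, -⟩ := gaussPeriod_relations 3 (by norm_num) (by norm_num)
  have hneg := gaussPeriod_three_neg
  have hsq : Real.sqrt 17 = -(2 * gaussPeriod 3 + 1) := by
    have h17 : (17 : ℝ) = (-(2 * gaussPeriod 3 + 1)) ^ 2 := by linear_combination -4 * hS
    rw [h17, Real.sqrt_sq (by nlinarith)]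
  rw [hsq]
  ring_nf

/-- Example (m = 17): with `h = 8` the multiplicative order of `2` mod `17`, the
exponent `α(17) = max_{1 ≤ l ≤ 16} (1 + (1/(8 ln 2)) Σ_{k<8} ln |sin(π l 2^k/17)|)`
equals `ln(17 + 4√17)/ln 256`, the maximum being attained at `l = 3` but not at
`l = 1`. -/
theorem alpha_seventeen :
    orderOf (2 : ZMod 17) = 8 ∧
    IsGreatest { y : ℝ | ∃ l ∈ Finset.Icc (1 : ℕ) 16,
        y = 1 + (1 / (8 * Real.log 2)) *
          ∑ k ∈ Finset.range 8, Real.log |Real.sin (Real.pi * l * 2 ^ k / 17)| }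
      (Real.log (17 + 4 * Real.sqrt 17) / Real.log 256) ∧
    (1 + (1 / (8 * Real.log 2)) *
        ∑ k ∈ Finset.range 8, Real.log |Real.sin (Real.pi * (3 : ℕ) * 2 ^ k / 17)| =
      Real.log (17 + 4 * Real.sqrt 17) / Real.log 256) ∧
    (1 + (1 / (8 * Real.log 2)) *
        ∑ k ∈ Finset.range 8, Real.log |Real.sin (Real.pi * (1 : ℕ) * 2 ^ k / 17)| ≠
      Real.log (17 + 4 * Real.sqrt 17) / Real.log 256) := by
  have hr0 : 0 ≤ Real.sqrt 17 := Real.sqrt_nonneg _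
  have hl : 0 < Real.log 256 := Real.log_pos (by norm_num)
  refine ⟨?_, ⟨⟨3, by simp, exponent_three.symm⟩, ?_⟩, exponent_three, ?_⟩
  · exact orderOf_eq_prime_pow (p := 2) (n := 2) (by decide) (by decide)
  · rintro y ⟨l, hmem, rfl⟩
    obtain ⟨h1, h16⟩ := Finset.mem_Icc.mp hmem
    rw [exponent_eq l h1 h16]
    obtain ⟨hS, -⟩ := gaussPeriod_relations l h1 h16
    -- `(2 S + 1)² = 17`, so `2 S + 1 ≥ -√17`.
    have habs : |2 * gaussPeriod l + 1| ≤ Real.sqrt 17 :=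
      Real.abs_le_sqrt (by linarith)
    have := (abs_le.mp habs).1
    gcongr
    · exact thirteen_sub_pos h1 h16
    · linarith
  · rw [exponent_eq 1 (by norm_num) (by norm_num)]
    have hp := gaussPeriod_one_pos
    apply ne_of_lt
    gcongr
    · exact thirteen_sub_pos (by norm_num) (by norm_num)
    · linarith
end
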